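/- Let L > 0, T > 0, β < 0, M > 0. Suppose h₁, h₂ : ℝ × [0,T] → ℝ are such that for each t, h_k(·,t) ∈ C⁴(ℝ) with h_k(x+L,t) = h_k(x,t) − 1, ∂_x h_k(x,t) ≤ β/2 < 0, |∂_x² h₁(x,t)| ≤ M, the maps are C¹ in t with continuous mixed derivatives, and each satisfies pointwise the evolution equation ∂_t h = −(2π/L)·H(∂_x³ h) + ∂_x²( (3 ∂_x h + 1/∂_x h) · ∂_x² h ), where H is the L-periodic Hilbert transform. Then there is a constant C, depending only on β, M, L, T, such that for all t ∈ [0,T]: ∫₀^L (h₁ − h₂)²(x,t) dx ≤ C · ∫₀^L (h₁ − h₂)²(x,0) dx. In particular, if h₁(·,0) = h₂(·,0) then h₁ ≡ h₂ on ℝ × [0,T]. -/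

import Mathlib

open Real Filter Topology MeasureTheory

/-- `IsStepPDESol L T β h H` says: for each `t ∈ [0,T]`, `h(·,t)` is `C⁴`, satisfies
`h(x+L,t) = h(x,t) − 1` and `∂ₓh ≤ β/2 < 0`; `h` is jointly continuous; `H(·,t)` is the
`L`-periodic Hilbert transform of `∂ₓ³h(·,t)` (principal-value characterization); and `h`
solves, in the `HasDerivWithinAt` sense in time on `[0,T]`,
`∂ₜh = −(2π/L) H(∂ₓ³h) + ∂ₓ²((3∂ₓh + 1/∂ₓh)·∂ₓ²h)`. -/
def IsStepPDESol (L T β : ℝ) (h H : ℝ → ℝ → ℝ) : Prop :=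
  (∀ t ∈ Set.Icc (0:ℝ) T, ContDiff ℝ 4 (fun x => h x t)) ∧
  (∀ t ∈ Set.Icc (0:ℝ) T, ∀ x : ℝ, h (x + L) t = h x t - 1) ∧
  (∀ t ∈ Set.Icc (0:ℝ) T, ∀ x : ℝ, deriv (fun z => h z t) x ≤ β / 2) ∧
  Continuous (fun p : ℝ × ℝ => h p.1 p.2) ∧
  (∀ x : ℝ, ∀ t ∈ Set.Icc (0:ℝ) T,
    Tendsto (fun δ : ℝ =>
        (1 / L) * ∫ s in δ..(L - δ),
          iteratedDeriv 3 (fun z => h z t) (x - s) * Real.cot (π * s / L))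
      (𝓝[>] (0:ℝ)) (𝓝 (H x t))) ∧
  (∀ x : ℝ, ∀ t ∈ Set.Icc (0:ℝ) T,
    HasDerivWithinAt (fun τ => h x τ)
      (-(2 * π / L) * H x t
        + iteratedDeriv 2
            (fun y => (3 * deriv (fun z => h z t) y + 1 / deriv (fun z => h z t) y)
              * iteratedDeriv 2 (fun z => h z t) y) x)
      (Set.Icc 0 T) t)

/-!
For two step profiles `f`, `g` the velocity is one-sided Lipschitz in `L²(0, L)`: integrating by
parts twice, the local part of the velocity contributes at most
`9β/8 ‖(f - g)''‖² + C ‖(f - g)'‖²`, the Hilbert transform term is controlled by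
`ε ‖(f - g)''‖² + C ‖(f - g)'‖²`, and interpolating `‖(f - g)'‖` between `‖(f - g)''‖` and `‖f - g‖`
leaves `K ‖f - g‖²`. Stability is then Grönwall's inequality for `‖h₁ - h₂‖²`.

The time derivative exists only pointwise in `x`, with no local bound in time, so `‖h₁ - h₂‖²` has
to be shown differentiable from the right. This holds at times where `t ↦ h(·, t)` is right
Lipschitz in `L²`. The times at which `|∂ₓ⁴h| ≤ n` form a closed set `Aₙ`, and these sets cover
`[0, T]`. Comparing a solution with its own value frozen at a time of `Aₙ` gives, again by
dissipativity and Grönwall, a Lipschitz bound across every interval of good times starting in `Aₙ`.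
If there were bad times, by Baire's theorem some `Aₙ` would contain a portion of the closure `Z` of
the set of bad times; on that portion the velocity is bounded, and together with the bounds across
the gaps of `Z` this makes the solution right Lipschitz at bad times, a contradiction.
-/

/-! ### Periodic functions -/

/-- The squared `L²` norm of `f` over the period `[0, L]`. -/
noncomputable def l2NormSq (L : ℝ) (f : ℝ → ℝ) : ℝ :=
  ∫ x in (0 : ℝ)..L, f x ^ 2

theorem l2NormSq_nonneg {L : ℝ} (hL : 0 ≤ L) (f : ℝ → ℝ) : 0 ≤ l2NormSq L f :=
  intervalIntegral.integral_nonneg hL fun x _ => sq_nonneg (f x)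

theorem l2NormSq_zero (L : ℝ) : l2NormSq L 0 = 0 := by
  simp [l2NormSq]

theorem l2NormSq_sub_comm (L : ℝ) (f g : ℝ → ℝ) : l2NormSq L (f - g) = l2NormSq L (g - f) := by
  simp only [l2NormSq, Pi.sub_apply, sub_sq_comm]

theorem l2NormSq_add_le {L : ℝ} (hL : 0 ≤ L) {f g : ℝ → ℝ} (hf : Continuous f)
    (hg : Continuous g) : l2NormSq L (f + g) ≤ 2 * l2NormSq L f + 2 * l2NormSq L g := by
  have hcont_f : Continuous fun x => 2 * f x ^ 2 := by fun_prop
  have hcont_g : Continuous fun x => 2 * g x ^ 2 := by fun_prop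
  calc l2NormSq L (f + g) ≤ ∫ x in (0 : ℝ)..L, (2 * f x ^ 2 + 2 * g x ^ 2) :=
        intervalIntegral.integral_mono_on hL
          (Continuous.intervalIntegrable (by fun_prop) _ _)
          (Continuous.intervalIntegrable (by fun_prop) _ _)
          fun x _ => by rw [Pi.add_apply]; linarith [add_sq_le (a := f x) (b := g x)]
    _ = 2 * l2NormSq L f + 2 * l2NormSq L g := by
        rw [intervalIntegral.integral_add (hcont_f.intervalIntegrable _ _)
          (hcont_g.intervalIntegrable _ _), intervalIntegral.integral_const_mul,
          intervalIntegral.integral_const_mul, l2NormSq, l2NormSq]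

theorem eq_zero_of_l2NormSq_eq_zero {L : ℝ} (hL : 0 < L) {f : ℝ → ℝ} (hf : Continuous f)
    (hper : Function.Periodic f L) (hzero : l2NormSq L f = 0) : f = 0 := by
  funext x
  obtain ⟨y, hy, hxy⟩ := hper.exists_mem_Ico₀ hL x
  rw [hxy]
  by_contra hne
  have hpos : 0 < l2NormSq L f :=
    intervalIntegral.integral_pos hL (by fun_prop) (fun z _ => sq_nonneg (f z))
      ⟨y, Set.Ico_subset_Icc_self hy, sq_pos_of_ne_zero hne⟩
  exact hpos.ne' hzero

theorem continuous_l2NormSq {X : Type*} [TopologicalSpace X] (L : ℝ) {w : X → ℝ → ℝ}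
    (hw : Continuous (Function.uncurry w)) : Continuous fun t => l2NormSq L (w t) :=
  intervalIntegral.continuous_parametric_intervalIntegral_of_continuous' (hw.pow 2) 0 L

theorem hasDerivAt_iteratedDeriv {n : WithTop ℕ∞} {f : ℝ → ℝ} (hf : ContDiff ℝ n f) {k : ℕ}
    (hk : (k : WithTop ℕ∞) < n) (x : ℝ) :
    HasDerivAt (iteratedDeriv k f) (iteratedDeriv (k + 1) f x) x := by
  rw [iteratedDeriv_succ]
  exact (hf.differentiable_iteratedDeriv k hk x).hasDerivAt

theorem periodic_iteratedDeriv {L : ℝ} {f : ℝ → ℝ} (hf : Function.Periodic f L) (k : ℕ) :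
    Function.Periodic (iteratedDeriv k f) L := by
  intro x
  rw [← congrFun (iteratedDeriv_comp_add_const k f L) x]
  simp only [hf _]

theorem periodic_deriv_of_add_eq_add {L c : ℝ} {f : ℝ → ℝ} (hf : ∀ x, f (x + L) = f x + c) :
    Function.Periodic (deriv f) L := by
  intro x
  rw [← deriv_comp_add_const]
  simp only [hf, deriv_add_const]

theorem exists_forall_abs_le_of_periodic {L : ℝ} (hL : L ≠ 0) {f : ℝ → ℝ} (hf : Continuous f)
    (hper : Function.Periodic f L) : ∃ N, ∀ x, |f x| ≤ N := by
  obtain ⟨N, hN⟩ := (hper.compact_of_continuous hL hf).isBounded.exists_norm_le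
  exact ⟨N, fun x => hN _ ⟨x, rfl⟩⟩

theorem abs_sub_le_of_abs_deriv_le {f f' : ℝ → ℝ} {N : ℝ} (hf : ∀ x, HasDerivAt f (f' x) x)
    (hN : ∀ x, |f' x| ≤ N) (x y : ℝ) : |f x - f y| ≤ N * |x - y| :=
  convex_univ.norm_image_sub_le_of_norm_hasDerivWithin_le
    (fun z _ => (hf z).hasDerivWithinAt) (fun z _ => hN z) (Set.mem_univ y) (Set.mem_univ x)

/-- Rolle's theorem on a period provides a zero of `f'` within distance `L` of every point. -/
theorem abs_deriv_le_of_periodic {L N : ℝ} (hL : 0 < L) {f f' f'' : ℝ → ℝ}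
    (hf : ∀ x, HasDerivAt f (f' x) x) (hf' : ∀ x, HasDerivAt f' (f'' x) x)
    (hper : Function.Periodic f L) (hN : ∀ x, |f'' x| ≤ N) (x : ℝ) : |f' x| ≤ N * L := by
  have hcont : Continuous f := continuous_iff_continuousAt.2 fun y => (hf y).continuousAt
  obtain ⟨ξ, hξ, hzero⟩ := exists_hasDerivAt_eq_zero (show x < x + L by linarith)
    hcont.continuousOn (hper x).symm fun y _ => hf y
  have hdist : |x - ξ| ≤ L := by rw [abs_le]; constructor <;> linarith [hξ.1, hξ.2]
  calc |f' x| = |f' x - f' ξ| := by rw [hzero, sub_zero]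
    _ ≤ N * |x - ξ| := abs_sub_le_of_abs_deriv_le hf' hN x ξ
    _ ≤ N * L := mul_le_mul_of_nonneg_left hdist ((abs_nonneg _).trans (hN x))

theorem integral_mul_deriv_of_periodic {L : ℝ} {f f' g g' : ℝ → ℝ}
    (hf : ∀ x, HasDerivAt f (f' x) x) (hg : ∀ x, HasDerivAt g (g' x) x) (hf' : Continuous f')
    (hg' : Continuous g') (hper_f : Function.Periodic f L) (hper_g : Function.Periodic g L) :
    ∫ x in (0 : ℝ)..L, f x * g' x = -∫ x in (0 : ℝ)..L, f' x * g x := by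
  rw [intervalIntegral.integral_mul_deriv_eq_deriv_mul (fun x _ => hf x) (fun x _ => hg x)
    (hf'.intervalIntegrable _ _) (hg'.intervalIntegrable _ _), hper_f.eq, hper_g.eq]
  ring

theorem integral_comp_sub_of_periodic {L : ℝ} {f : ℝ → ℝ} (hf : Function.Periodic f L) (s : ℝ) :
    ∫ x in (0 : ℝ)..L, f (x - s) = ∫ x in (0 : ℝ)..L, f x := by
  rw [intervalIntegral.integral_comp_sub_right f s]
  convert hf.intervalIntegral_add_eq (0 - s) 0 using 2 <;> ring

theorem abs_mul_le_mul_sq_add {η : ℝ} (hη : 0 < η) (a b : ℝ) :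
    |a * b| ≤ η * a ^ 2 + 1 / (4 * η) * b ^ 2 := by
  have hsquare : η * a ^ 2 + 1 / (4 * η) * b ^ 2 - |a| * |b| = η * (|a| - |b| / (2 * η)) ^ 2 := by
    rw [← sq_abs a, ← sq_abs b]
    field_simp
    ring
  have hnonneg : 0 ≤ η * (|a| - |b| / (2 * η)) ^ 2 := by positivity
  rw [abs_mul]
  linarith

theorem abs_integral_mul_comp_sub_le {L : ℝ} (hL : 0 ≤ L) {f g : ℝ → ℝ} (hf : Continuous f)
    (hg : Continuous g) (hper : Function.Periodic g L) (s : ℝ) {η : ℝ} (hη : 0 < η) :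
    |∫ x in (0 : ℝ)..L, f x * g (x - s)| ≤ η * l2NormSq L f + 1 / (4 * η) * l2NormSq L g := by
  have hshift : ∫ x in (0 : ℝ)..L, g (x - s) ^ 2 = l2NormSq L g :=
    integral_comp_sub_of_periodic (hper.comp (· ^ 2)) s
  rw [← hshift, l2NormSq, ← intervalIntegral.integral_const_mul,
    ← intervalIntegral.integral_const_mul,
    ← intervalIntegral.integral_add (Continuous.intervalIntegrable (by fun_prop) _ _)
      (Continuous.intervalIntegrable (by fun_prop) _ _)]
  refine (intervalIntegral.abs_integral_le_integral_abs hL).trans ?_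
  exact intervalIntegral.integral_mono_on hL (Continuous.intervalIntegrable (by fun_prop) _ _)
    (Continuous.intervalIntegrable (by fun_prop) _ _) fun x _ => abs_mul_le_mul_sq_add hη _ _

theorem l2NormSq_deriv_le {L : ℝ} (hL : 0 ≤ L) {f f' f'' : ℝ → ℝ}
    (hf : ∀ x, HasDerivAt f (f' x) x) (hf' : ∀ x, HasDerivAt f' (f'' x) x) (hf'' : Continuous f'')
    (hper : Function.Periodic f L) (hper' : Function.Periodic f' L) {η : ℝ} (hη : 0 < η) :
    l2NormSq L f' ≤ η * l2NormSq L f'' + 1 / (4 * η) * l2NormSq L f := by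
  have hcont : Continuous f := continuous_iff_continuousAt.2 fun y => (hf y).continuousAt
  have hcont' : Continuous f' := continuous_iff_continuousAt.2 fun y => (hf' y).continuousAt
  have hparts : l2NormSq L f' = -∫ x in (0 : ℝ)..L, f'' x * f (x - 0) := by
    simpa only [l2NormSq, pow_two, sub_zero] using
      integral_mul_deriv_of_periodic hf' hf hf'' hcont' hper' hper
  rw [hparts]
  exact (neg_le_abs _).trans (abs_integral_mul_comp_sub_le hL hf'' hcont hper 0 hη)

theorem intervalIntegral_swap_of_continuous {a b c d : ℝ} {F : ℝ → ℝ → ℝ}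
    (hF : Continuous (Function.uncurry F)) :
    ∫ x in a..b, ∫ y in c..d, F x y = ∫ y in c..d, ∫ x in a..b, F x y := by
  apply intervalIntegral_intervalIntegral_swap
  have hcompact : IsCompact (Set.uIcc a b ×ˢ Set.uIcc c d) := isCompact_uIcc.prod isCompact_uIcc
  exact (hF.continuousOn.integrableOn_compact hcompact).mono_set
    (Set.prod_mono Set.uIoc_subset_uIcc Set.uIoc_subset_uIcc)

theorem intervalIntegrable_of_measurable_of_abs_le {a b N : ℝ} {f : ℝ → ℝ} (hf : Measurable f)
    (hN : ∀ x, |f x| ≤ N) : IntervalIntegrable f volume a b :=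
  (intervalIntegrable_const (c := N)).mono_fun' hf.aestronglyMeasurable (ae_of_all _ hN)

/-! ### The periodic Hilbert transform -/

theorem cot_pi_mul_sub_div {L : ℝ} (hL : L ≠ 0) (s : ℝ) :
    Real.cot (π * (L - s) / L) = -Real.cot (π * s / L) := by
  have hangle : π * (L - s) / L = π - π * s / L := by field_simp
  rw [hangle, Real.cot_eq_cos_div_sin, Real.cot_eq_cos_div_sin, Real.cos_pi_sub,
    Real.sin_pi_sub, neg_div]

theorem mul_abs_cot_le_one {y : ℝ} (hy : 0 < y) (hy' : y ≤ π / 2) : y * |Real.cot y| ≤ 1 := by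
  have hsin : 0 < Real.sin y := Real.sin_pos_of_pos_of_lt_pi hy (by linarith)
  have hcos : 0 ≤ Real.cos y := Real.cos_nonneg_of_neg_pi_div_two_le_of_le (by linarith) hy'
  rw [Real.cot_eq_cos_div_sin, abs_of_nonneg (by positivity), ← mul_div_assoc, div_le_one hsin]
  rcases hy'.lt_or_eq with hlt | rfl
  · rw [← le_div_iff₀ (Real.cos_pos_of_mem_Ioo ⟨by linarith, hlt⟩), ← Real.tan_eq_sin_div_cos]
    exact Real.le_tan hy.le hlt
  · simp

theorem min_mul_abs_cot_le {L s : ℝ} (hs : 0 < s) (hsL : s < L) :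
    min s (L - s) * |Real.cot (π * s / L)| ≤ L / π := by
  have hL : 0 < L := hs.trans hsL
  have hleft : ∀ r, 0 < r → r ≤ L / 2 → r * |Real.cot (π * r / L)| ≤ L / π := by
    intro r hr hr'
    have hangle : π * r / L ≤ π / 2 := by rw [div_le_iff₀ hL]; nlinarith [Real.pi_pos]
    calc r * |Real.cot (π * r / L)| = L / π * (π * r / L * |Real.cot (π * r / L)|) := by
          field_simp
      _ ≤ L / π * 1 := by gcongr; exact mul_abs_cot_le_one (by positivity) hangle
      _ = L / π := mul_one _
  rcases le_total s (L / 2) with hhalf | hhalf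
  · rw [min_eq_left (by linarith)]
    exact hleft s hs hhalf
  · rw [min_eq_right (by linarith), ← abs_neg, ← cot_pi_mul_sub_div hL.ne']
    exact hleft (L - s) (by linarith) (by linarith)

theorem abs_mul_cot_le_of_abs_le_min {L s a A : ℝ} (hs : s ∈ Set.Ioo 0 L)
    (hA : |A| ≤ min s (L - s) * a) : |A * Real.cot (π * s / L)| ≤ L / π * a := by
  have hmin : 0 < min s (L - s) := lt_min hs.1 (sub_pos.2 hs.2)
  have ha : 0 ≤ a := (mul_nonneg_iff_of_pos_left hmin).1 ((abs_nonneg A).trans hA)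
  calc |A * Real.cot (π * s / L)| = |A| * |Real.cot (π * s / L)| := abs_mul _ _
    _ ≤ min s (L - s) * a * |Real.cot (π * s / L)| := by gcongr
    _ = min s (L - s) * |Real.cot (π * s / L)| * a := by ring
    _ ≤ L / π * a := by gcongr; exact min_mul_abs_cot_le hs.1 hs.2

theorem abs_cot_le_of_mem_Icc {L ρ s : ℝ} (hρ : 0 < ρ) (hs : s ∈ Set.Icc ρ (L - ρ)) :
    |Real.cot (π * s / L)| ≤ L / π / ρ := by
  rw [le_div_iff₀' hρ]
  calc ρ * |Real.cot (π * s / L)| ≤ min s (L - s) * |Real.cot (π * s / L)| := by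
        gcongr; exact le_min hs.1 (by linarith [hs.2])
    _ ≤ L / π := min_mul_abs_cot_le (hρ.trans_le hs.1) (by linarith [hs.2])

theorem continuousOn_cot_pi_mul_div (L : ℝ) :
    ContinuousOn (fun s => Real.cot (π * s / L)) (Set.Ioo 0 L) := by
  simp only [Real.cot_eq_cos_div_sin]
  refine ContinuousOn.div (by fun_prop) (by fun_prop) fun s hs => ?_
  have hL : 0 < L := hs.1.trans hs.2
  have hs0 : 0 < s := hs.1
  refine (Real.sin_pos_of_pos_of_lt_pi (by positivity) ?_).ne'
  rw [div_lt_iff₀ hL]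
  exact mul_lt_mul_of_pos_left hs.2 Real.pi_pos

theorem exists_continuous_integral_mul_cot_eq {L δ : ℝ} (hδ : 0 < δ) (hδL : δ ≤ L - δ) :
    ∃ k : ℝ → ℝ, Continuous k ∧ ∀ g : ℝ → ℝ,
      ∫ s in δ..(L - δ), g s * Real.cot (π * s / L) = ∫ s in δ..(L - δ), g s * k s := by
  have hcont : ContinuousOn (fun s => Real.cot (π * s / L)) (Set.Icc δ (L - δ)) :=
    (continuousOn_cot_pi_mul_div L).mono fun s hs => ⟨hδ.trans_le hs.1, by linarith [hs.2]⟩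
  refine ⟨_, (continuousOn_iff_continuous_domRestrict.1 hcont).Icc_extend' (h := hδL), fun g =>
    intervalIntegral.integral_congr fun s hs => ?_⟩
  rw [Set.uIcc_of_le hδL] at hs
  simp only [Set.IccExtend_of_mem _ _ hs, Set.domRestrict_apply]

theorem integral_cot_eq_zero {L : ℝ} (hL : L ≠ 0) (δ : ℝ) :
    ∫ s in δ..(L - δ), Real.cot (π * s / L) = 0 := by
  have hreflect := intervalIntegral.integral_comp_sub_left (a := δ) (b := L - δ)
    (fun s => Real.cot (π * s / L)) L
  simp only [sub_sub_cancel, cot_pi_mul_sub_div hL, intervalIntegral.integral_neg] at hreflect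
  linarith

/-- The `L`-periodic Hilbert transform with the window `|s| < δ` around the singularity of the
kernel removed. -/
noncomputable def truncatedHilbert (L : ℝ) (u : ℝ → ℝ) (δ x : ℝ) : ℝ :=
  (1 / L) * ∫ s in δ..(L - δ), u (x - s) * Real.cot (π * s / L)

/-- `Hu` is the `L`-periodic Hilbert transform of `u`: the principal value exists at every point
and equals `Hu`. -/
def IsHilbertTransform (L : ℝ) (u Hu : ℝ → ℝ) : Prop :=
  ∀ x, Tendsto (fun δ => truncatedHilbert L u δ x) (𝓝[>] 0) (𝓝 (Hu x))

theorem eventually_pos_and_lt {ρ : ℝ} (hρ : 0 < ρ) : ∀ᶠ δ in 𝓝[>] (0 : ℝ), 0 < δ ∧ δ < ρ :=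
  Ioo_mem_nhdsGT hρ

section TruncatedHilbert

variable {L δ : ℝ} {u : ℝ → ℝ}

theorem continuous_truncatedHilbert (hδ : 0 < δ) (hδL : δ < L / 2) (hu : Continuous u) :
    Continuous (truncatedHilbert L u δ) := by
  obtain ⟨k, hk, hk_eq⟩ := exists_continuous_integral_mul_cot_eq hδ (by linarith : δ ≤ L - δ)
  have hrepr : truncatedHilbert L u δ = fun x => (1 / L) * ∫ s in δ..(L - δ), u (x - s) * k s :=
    funext fun x => by rw [truncatedHilbert, hk_eq fun s => u (x - s)]
  rw [hrepr]
  exact continuous_const.mul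
    (intervalIntegral.continuous_parametric_intervalIntegral_of_continuous' (by fun_prop) _ _)

/-- The kernel has mean zero, so `u x` may be subtracted from `u (x - s)`, which compensates the
singularity of the kernel. -/
theorem truncatedHilbert_eq_integral_sub (hδ : 0 < δ) (hδL : δ < L / 2) (hu : Continuous u)
    (x : ℝ) :
    truncatedHilbert L u δ x
      = (1 / L) * ∫ s in δ..(L - δ), (u (x - s) - u x) * Real.cot (π * s / L) := by
  obtain ⟨k, hk, hk_eq⟩ := exists_continuous_integral_mul_cot_eq hδ (by linarith : δ ≤ L - δ)
  have hmean : ∫ s in δ..(L - δ), k s = 0 := by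
    simpa only [one_mul, integral_cot_eq_zero (show L ≠ 0 by linarith)] using
      (hk_eq fun _ => 1).symm
  rw [truncatedHilbert, hk_eq fun s => u (x - s), hk_eq fun s => u (x - s) - u x]
  simp only [sub_mul]
  rw [intervalIntegral.integral_sub (Continuous.intervalIntegrable (by fun_prop) _ _)
      (Continuous.intervalIntegrable (by fun_prop) _ _),
    intervalIntegral.integral_const_mul, hmean, mul_zero, sub_zero]

theorem abs_truncatedHilbert_le {N : ℝ} (hδ : 0 < δ) (hδL : δ < L / 2) (hu : Continuous u)
    (hper : Function.Periodic u L)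
    (hlip : ∀ x y, |u x - u y| ≤ N * |x - y|) (x : ℝ) :
    |truncatedHilbert L u δ x| ≤ N * (L / π) := by
  have hL : 0 < L := by linarith
  have hN : 0 ≤ N := by simpa using (abs_nonneg _).trans (hlip 1 0)
  have hmin : ∀ s, 0 < s → s < L → |u (x - s) - u x| ≤ N * min s (L - s) := by
    intro s hs hsL
    rw [mul_min_of_nonneg _ _ hN]
    refine le_min ?_ ?_
    · simpa [abs_of_pos hs] using hlip (x - s) x
    · have hwrap := hlip (x - s + L) x
      rwa [hper, show x - s + L - x = L - s by ring, abs_of_pos (sub_pos.2 hsL)] at hwrap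
  have hintegrand : ∀ s ∈ Set.uIoc δ (L - δ),
      ‖(u (x - s) - u x) * Real.cot (π * s / L)‖ ≤ N * (L / π) := by
    intro s hs
    rw [Set.uIoc_of_le (by linarith)] at hs
    have hs0 : 0 < s := hδ.trans hs.1
    have hsL : s < L := by linarith [hs.2]
    rw [mul_comm N]
    exact abs_mul_cot_le_of_abs_le_min ⟨hs0, hsL⟩ ((hmin s hs0 hsL).trans_eq (mul_comm _ _))
  have hlength : |L - δ - δ| ≤ L := by rw [abs_of_nonneg (by linarith)]; linarith
  rw [truncatedHilbert_eq_integral_sub hδ hδL hu, abs_mul, abs_of_pos (by positivity : 0 < 1 / L)]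
  calc 1 / L * |∫ s in δ..(L - δ), (u (x - s) - u x) * Real.cot (π * s / L)|
      ≤ 1 / L * (N * (L / π) * L) := by
        gcongr
        exact (intervalIntegral.norm_integral_le_of_norm_le_const hintegrand).trans (by gcongr)
    _ = N * (L / π) := by field_simp

theorem truncatedHilbert_sub {v : ℝ → ℝ} (hδ : 0 < δ) (hδL : δ < L / 2) (hu : Continuous u)
    (hv : Continuous v) (x : ℝ) :
    truncatedHilbert L (u - v) δ x = truncatedHilbert L u δ x - truncatedHilbert L v δ x := by
  obtain ⟨k, hk, hk_eq⟩ := exists_continuous_integral_mul_cot_eq hδ (by linarith : δ ≤ L - δ)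
  rw [truncatedHilbert, truncatedHilbert, truncatedHilbert, hk_eq fun s => u (x - s),
    hk_eq fun s => v (x - s), hk_eq fun s => (u - v) (x - s)]
  simp only [Pi.sub_apply, sub_mul]
  rw [intervalIntegral.integral_sub (Continuous.intervalIntegrable (by fun_prop) _ _)
    (Continuous.intervalIntegrable (by fun_prop) _ _), mul_sub]

end TruncatedHilbert

namespace IsHilbertTransform

variable {L : ℝ} {u Hu : ℝ → ℝ}

theorem sub {v Hv : ℝ → ℝ} (hL : 0 < L) (hu : Continuous u) (hv : Continuous v)
    (hHu : IsHilbertTransform L u Hu) (hHv : IsHilbertTransform L v Hv) :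
    IsHilbertTransform L (u - v) (Hu - Hv) := by
  intro x
  refine ((hHu x).sub (hHv x)).congr' ?_
  filter_upwards [eventually_pos_and_lt (half_pos hL)] with δ hδ
  exact (truncatedHilbert_sub hδ.1 hδ.2 hu hv x).symm

theorem measurable (hL : 0 < L) (hu : Continuous u) (hHu : IsHilbertTransform L u Hu) :
    Measurable Hu := by
  obtain ⟨δ, hδ⟩ := exists_seq_tendsto (𝓝[>] (0 : ℝ))
  have hwindow : ∀ᶠ n in atTop, 0 < δ n ∧ δ n < L / 2 :=
    hδ.eventually (eventually_pos_and_lt (half_pos hL))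
  obtain ⟨n₀, hn₀⟩ := eventually_atTop.1 hwindow
  refine measurable_of_tendsto_metrizable (f := fun n => truncatedHilbert L u (δ (n + n₀)))
    (fun n => ?_) (tendsto_pi_nhds.2 fun x => ?_)
  · have hn := hn₀ (n + n₀) (Nat.le_add_left _ _)
    exact (continuous_truncatedHilbert hn.1 hn.2 hu).measurable
  · exact (hHu x).comp (hδ.comp (tendsto_add_atTop_nat n₀))

theorem abs_le {N : ℝ} (hL : 0 < L) (hu : Continuous u) (hper : Function.Periodic u L)
    (hlip : ∀ x y, |u x - u y| ≤ N * |x - y|) (hHu : IsHilbertTransform L u Hu) (x : ℝ) :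
    |Hu x| ≤ N * (L / π) := by
  refine le_of_tendsto (hHu x).abs ?_
  filter_upwards [eventually_pos_and_lt (half_pos hL)] with δ hδ
  exact abs_truncatedHilbert_le hδ.1 hδ.2 hu hper hlip x

end IsHilbertTransform

theorem abs_integral_deriv_mul_comp_sub_le {L : ℝ} (hL : 0 ≤ L) {f f' : ℝ → ℝ}
    (hf : ∀ x, HasDerivAt f (f' x) x) (hf' : Continuous f') (hper : Function.Periodic f L)
    (hper' : Function.Periodic f' L) (s : ℝ) :
    |∫ x in (0 : ℝ)..L, f' x * f (x - s)| ≤ |s| * l2NormSq L f' := by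
  have hcont : Continuous f := continuous_iff_continuousAt.2 fun x => (hf x).continuousAt
  have hzero : ∫ x in (0 : ℝ)..L, f' x * f x = 0 := by
    have hparts := integral_mul_deriv_of_periodic hf hf hf' hf' hper hper
    simp only [mul_comm (f _)] at hparts
    linarith
  have hftc : ∀ x, ∫ r in (0 : ℝ)..s, -(f' x * f' (x - r)) = f' x * f (x - s) - f' x * f x := by
    intro x
    rw [intervalIntegral.integral_eq_sub_of_hasDerivAt (f := fun r => f' x * f (x - r))
      (fun r _ => by simpa using ((hf (x - r)).comp_const_sub x r).const_mul (f' x))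
      (Continuous.intervalIntegrable (by fun_prop) _ _), sub_zero]
  have hswap : ∫ x in (0 : ℝ)..L, f' x * f (x - s)
      = ∫ r in (0 : ℝ)..s, ∫ x in (0 : ℝ)..L, -(f' x * f' (x - r)) := by
    rw [← intervalIntegral_swap_of_continuous (by fun_prop)]
    simp only [hftc]
    rw [intervalIntegral.integral_sub (Continuous.intervalIntegrable (by fun_prop) _ _)
      (Continuous.intervalIntegrable (by fun_prop) _ _), hzero, sub_zero]
  have hinner : ∀ r, ‖∫ x in (0 : ℝ)..L, -(f' x * f' (x - r))‖ ≤ l2NormSq L f' := by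
    intro r
    rw [intervalIntegral.integral_neg, norm_neg, Real.norm_eq_abs]
    linarith [abs_integral_mul_comp_sub_le hL hf' hf' hper' r one_half_pos]
  rw [hswap, mul_comm]
  simpa using intervalIntegral.norm_integral_le_of_norm_le_const (a := 0) (b := s)
    fun r _ => hinner r

theorem abs_integral_deriv_mul_comp_sub_le_min {L : ℝ} {f f' : ℝ → ℝ}
    (hf : ∀ x, HasDerivAt f (f' x) x) (hf' : Continuous f') (hper : Function.Periodic f L)
    (hper' : Function.Periodic f' L) {s : ℝ} (hs : 0 ≤ s) (hsL : s ≤ L) :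
    |∫ x in (0 : ℝ)..L, f' x * f (x - s)| ≤ min s (L - s) * l2NormSq L f' := by
  have hL : 0 ≤ L := hs.trans hsL
  have hwrap : ∀ x, f (x - s) = f (x - (s - L)) := fun x => by
    rw [← hper (x - s)]; congr 1; ring
  rw [min_mul_of_nonneg _ _ (l2NormSq_nonneg hL f')]
  refine le_min ?_ ?_
  · simpa only [abs_of_nonneg hs] using abs_integral_deriv_mul_comp_sub_le hL hf hf' hper hper' s
  · simp only [hwrap]
    simpa only [abs_of_nonpos (sub_nonpos.2 hsL), neg_sub] using
      abs_integral_deriv_mul_comp_sub_le hL hf hf' hper hper' (s - L)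

theorem abs_integral_le_of_abs_le_of_abs_le_middle {L δ ρ P Q : ℝ} {g : ℝ → ℝ} (hδ : 0 < δ)
    (hδρ : δ ≤ ρ) (hρL : ρ ≤ L / 2) (hg : ContinuousOn g (Set.Ioo 0 L))
    (hP : ∀ s ∈ Set.Ioo 0 L, |g s| ≤ P) (hQ : ∀ s ∈ Set.Icc ρ (L - ρ), |g s| ≤ Q) :
    |∫ s in δ..(L - δ), g s| ≤ 2 * ρ * P + L * Q := by
  have hP₀ : 0 ≤ P := (abs_nonneg _).trans (hP (L / 2) ⟨by linarith, by linarith⟩)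
  have hQ₀ : 0 ≤ Q := (abs_nonneg _).trans (hQ (L / 2) ⟨by linarith, by linarith⟩)
  have hint : ∀ a b, 0 < a → a ≤ b → b < L → IntervalIntegrable g volume a b :=
    fun a b ha hab hb => (hg.mono fun s hs => ⟨ha.trans_le hs.1, hs.2.trans_lt hb⟩)
      |>.intervalIntegrable_of_Icc hab
  have hpiece : ∀ a b C, a ≤ b → (∀ s ∈ Set.Icc a b, |g s| ≤ C) →
      |∫ s in a..b, g s| ≤ C * (b - a) := by
    intro a b C hab hC
    rw [← abs_of_nonneg (sub_nonneg.2 hab)]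
    refine intervalIntegral.norm_integral_le_of_norm_le_const (f := g) fun s hs => hC s ?_
    rw [Set.uIoc_of_le hab] at hs
    exact Set.Ioc_subset_Icc_self hs
  have hleft := hpiece δ ρ P hδρ fun s hs => hP s ⟨by linarith [hs.1], by linarith [hs.2]⟩
  have hmiddle := hpiece ρ (L - ρ) Q (by linarith) hQ
  have hright := hpiece (L - ρ) (L - δ) P (by linarith) fun s hs =>
    hP s ⟨by linarith [hs.1], by linarith [hs.2]⟩
  rw [← intervalIntegral.integral_add_adjacent_intervals
      (hint δ ρ hδ hδρ (by linarith)) (hint ρ (L - δ) (by linarith) (by linarith) (by linarith)),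
    ← intervalIntegral.integral_add_adjacent_intervals
      (hint ρ (L - ρ) (by linarith) (by linarith) (by linarith))
      (hint (L - ρ) (L - δ) (by linarith) (by linarith) (by linarith)), ← add_assoc]
  refine (abs_add_three _ _ _).trans ?_
  nlinarith

section HilbertPairing

variable {L : ℝ} {w : ℝ → ℝ}

theorem integral_mul_iteratedDeriv_three_comp_sub (hw : ContDiff ℝ 3 w)
    (hper : Function.Periodic w L) (s : ℝ) :
    ∫ x in (0 : ℝ)..L, w x * iteratedDeriv 3 w (x - s)
      = ∫ x in (0 : ℝ)..L, iteratedDeriv 2 w x * iteratedDeriv 1 w (x - s) := by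
  have hd : ∀ k < 3, ∀ x, HasDerivAt (iteratedDeriv k w) (iteratedDeriv (k + 1) w x) x :=
    fun k hk => hasDerivAt_iteratedDeriv hw (by exact_mod_cast hk)
  have hc : ∀ k ≤ 3, Continuous (iteratedDeriv k w) :=
    fun k hk => hw.continuous_iteratedDeriv k (by exact_mod_cast hk)
  have hshift : ∀ k < 3, ∀ x, HasDerivAt (fun x => iteratedDeriv k w (x - s))
      (iteratedDeriv (k + 1) w (x - s)) x :=
    fun k hk x => (hd k hk (x - s)).comp_sub_const x s
  have hfirst := integral_mul_deriv_of_periodic (hd 0 (by norm_num)) (hshift 2 (by norm_num))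
    (hc 1 (by norm_num)) ((hc 3 le_rfl).comp (by fun_prop)) (periodic_iteratedDeriv hper 0)
    ((periodic_iteratedDeriv hper 2).sub_const s)
  have hsecond := integral_mul_deriv_of_periodic (hd 1 (by norm_num)) (hshift 1 (by norm_num))
    (hc 2 (by norm_num)) ((hc 2 (by norm_num)).comp (by fun_prop)) (periodic_iteratedDeriv hper 1)
    ((periodic_iteratedDeriv hper 1).sub_const s)
  simp only [iteratedDeriv_zero] at hfirst
  rw [hfirst, hsecond, neg_neg]

theorem integral_mul_truncatedHilbert_eq {δ : ℝ} (hδ : 0 < δ) (hδL : δ < L / 2)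
    (hw : ContDiff ℝ 3 w) (hper : Function.Periodic w L) :
    ∫ x in (0 : ℝ)..L, w x * truncatedHilbert L (iteratedDeriv 3 w) δ x
      = (1 / L) * ∫ s in δ..(L - δ), (∫ x in (0 : ℝ)..L, iteratedDeriv 2 w x *
          iteratedDeriv 1 w (x - s)) * Real.cot (π * s / L) := by
  obtain ⟨k, hk, hk_eq⟩ := exists_continuous_integral_mul_cot_eq hδ (by linarith : δ ≤ L - δ)
  have hcont := hw.continuous
  have : Continuous (iteratedDeriv 3 w) := hw.continuous_iteratedDeriv 3 le_rfl
  rw [hk_eq]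
  simp only [← integral_mul_iteratedDeriv_three_comp_sub hw hper]
  calc ∫ x in (0 : ℝ)..L, w x * truncatedHilbert L (iteratedDeriv 3 w) δ x
      = ∫ x in (0 : ℝ)..L, 1 / L * ∫ s in δ..(L - δ), w x * iteratedDeriv 3 w (x - s) * k s := by
        congr! 2 with x
        rw [truncatedHilbert, hk_eq fun s => iteratedDeriv 3 w (x - s)]
        simp only [mul_assoc, intervalIntegral.integral_const_mul]
        ring
    _ = 1 / L * ∫ s in δ..(L - δ), ∫ x in (0 : ℝ)..L, w x * iteratedDeriv 3 w (x - s) * k s := by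
        rw [intervalIntegral.integral_const_mul, intervalIntegral_swap_of_continuous (by fun_prop)]
    _ = _ := by simp only [intervalIntegral.integral_mul_const]

theorem abs_integral_mul_truncatedHilbert_le {δ ρ η : ℝ} (hδ : 0 < δ) (hδρ : δ < ρ)
    (hρL : ρ ≤ L / 2) (hη : 0 < η) (hw : ContDiff ℝ 3 w) (hper : Function.Periodic w L) :
    |∫ x in (0 : ℝ)..L, w x * truncatedHilbert L (iteratedDeriv 3 w) δ x|
      ≤ 1 / π * (2 * ρ * l2NormSq L (iteratedDeriv 2 w) + L / ρ *
        (η * l2NormSq L (iteratedDeriv 2 w) + 1 / (4 * η) * l2NormSq L (iteratedDeriv 1 w))) := by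
  have hL : 0 < L := by linarith
  have hρ : 0 < ρ := hδ.trans hδρ
  have hd : ∀ x, HasDerivAt (iteratedDeriv 1 w) (iteratedDeriv 2 w x) x :=
    hasDerivAt_iteratedDeriv hw (by norm_num)
  have hc₁ : Continuous (iteratedDeriv 1 w) := hw.continuous_iteratedDeriv 1 (by norm_num)
  have hc₂ : Continuous (iteratedDeriv 2 w) := hw.continuous_iteratedDeriv 2 (by norm_num)
  have hper₁ := periodic_iteratedDeriv hper 1
  have hper₂ := periodic_iteratedDeriv hper 2
  set a := l2NormSq L (iteratedDeriv 2 w)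
  set b := l2NormSq L (iteratedDeriv 1 w)
  set A : ℝ → ℝ := fun s => ∫ x in (0 : ℝ)..L, iteratedDeriv 2 w x * iteratedDeriv 1 w (x - s)
  have hA_cont : Continuous A :=
    intervalIntegral.continuous_parametric_intervalIntegral_of_continuous' (by fun_prop) _ _
  have hA_min : ∀ s ∈ Set.Ioo 0 L, |A s| ≤ min s (L - s) * a := fun s hs =>
    abs_integral_deriv_mul_comp_sub_le_min hd hc₂ hper₁ hper₂ hs.1.le hs.2.le
  have hA_young : ∀ s, |A s| ≤ η * a + 1 / (4 * η) * b := fun s =>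
    abs_integral_mul_comp_sub_le hL.le hc₂ hc₁ hper₁ s hη
  have hglobal : ∀ s ∈ Set.Ioo 0 L, |A s * Real.cot (π * s / L)| ≤ L / π * a :=
    fun s hs => abs_mul_cot_le_of_abs_le_min hs (hA_min s hs)
  have hmiddle : ∀ s ∈ Set.Icc ρ (L - ρ), |A s * Real.cot (π * s / L)|
      ≤ (η * a + 1 / (4 * η) * b) * (L / π / ρ) := by
    intro s hs
    rw [abs_mul]
    exact mul_le_mul (hA_young s) (abs_cot_le_of_mem_Icc hρ hs) (abs_nonneg _)
      ((abs_nonneg _).trans (hA_young s))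
  rw [integral_mul_truncatedHilbert_eq hδ (by linarith) hw hper, abs_mul,
    abs_of_pos (by positivity : 0 < 1 / L)]
  calc 1 / L * |∫ s in δ..(L - δ), A s * Real.cot (π * s / L)|
      ≤ 1 / L * (2 * ρ * (L / π * a) + L * ((η * a + 1 / (4 * η) * b) * (L / π / ρ))) := by
        gcongr
        exact abs_integral_le_of_abs_le_of_abs_le_middle hδ hδρ.le hρL
          (hA_cont.continuousOn.mul (continuousOn_cot_pi_mul_div L)) hglobal hmiddle
    _ = 1 / π * (2 * ρ * a + L / ρ * (η * a + 1 / (4 * η) * b)) := by field_simp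

theorem tendsto_integral_mul_truncatedHilbert {v u Hu : ℝ → ℝ} {N : ℝ} (hL : 0 < L)
    (hv : Continuous v) (hu : Continuous u) (hper : Function.Periodic u L)
    (hlip : ∀ x y, |u x - u y| ≤ N * |x - y|) (hHu : IsHilbertTransform L u Hu) :
    Tendsto (fun δ => ∫ x in (0 : ℝ)..L, v x * truncatedHilbert L u δ x) (𝓝[>] 0)
      (𝓝 (∫ x in (0 : ℝ)..L, v x * Hu x)) := by
  refine intervalIntegral.tendsto_integral_filter_of_dominated_convergence
    (fun x => |v x| * (N * (L / π))) ?_ ?_ ?_ (ae_of_all _ fun x _ => (hHu x).const_mul (v x))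
  · filter_upwards [eventually_pos_and_lt (half_pos hL)] with δ hδ
    exact (hv.mul (continuous_truncatedHilbert hδ.1 hδ.2 hu)).aestronglyMeasurable
  · filter_upwards [eventually_pos_and_lt (half_pos hL)] with δ hδ
    refine ae_of_all _ fun x _ => ?_
    rw [norm_mul, Real.norm_eq_abs, Real.norm_eq_abs]
    gcongr
    exact abs_truncatedHilbert_le hδ.1 hδ.2 hu hper hlip x
  · exact Continuous.intervalIntegrable (by fun_prop) _ _

theorem abs_integral_mul_hilbert_le {Hw : ℝ → ℝ} {ρ η : ℝ} (hρ : 0 < ρ) (hρL : ρ ≤ L / 2)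
    (hη : 0 < η) (hw : ContDiff ℝ 4 w) (hper : Function.Periodic w L)
    (hHw : IsHilbertTransform L (iteratedDeriv 3 w) Hw) :
    |∫ x in (0 : ℝ)..L, w x * Hw x|
      ≤ 1 / π * (2 * ρ * l2NormSq L (iteratedDeriv 2 w) + L / ρ *
        (η * l2NormSq L (iteratedDeriv 2 w) + 1 / (4 * η) * l2NormSq L (iteratedDeriv 1 w))) := by
  have hL : 0 < L := by linarith
  obtain ⟨N, hN⟩ := exists_forall_abs_le_of_periodic hL.ne'
    (hw.continuous_iteratedDeriv 4 le_rfl) (periodic_iteratedDeriv hper 4)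
  have hlip := abs_sub_le_of_abs_deriv_le (hasDerivAt_iteratedDeriv hw (k := 3) (by norm_num)) hN
  refine le_of_tendsto (tendsto_integral_mul_truncatedHilbert hL hw.continuous
    (hw.continuous_iteratedDeriv 3 (by norm_num)) (periodic_iteratedDeriv hper 3) hlip hHw).abs ?_
  filter_upwards [eventually_pos_and_lt hρ] with δ hδ
  exact abs_integral_mul_truncatedHilbert_le hδ.1 hδ.2 hρL hη (hw.of_le (by norm_num)) hper

end HilbertPairing

theorem exists_abs_integral_mul_hilbert_le {L ε : ℝ} (hL : 0 < L) (hε : 0 < ε) :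
    ∃ C, 0 ≤ C ∧ ∀ w Hw : ℝ → ℝ, ContDiff ℝ 4 w → Function.Periodic w L →
      IsHilbertTransform L (iteratedDeriv 3 w) Hw →
      |∫ x in (0 : ℝ)..L, w x * Hw x|
        ≤ ε * l2NormSq L (iteratedDeriv 2 w) + C * l2NormSq L (iteratedDeriv 1 w) := by
  set ρ := min (L / 2) (ε * π / 4)
  have hρ : 0 < ρ := lt_min (by positivity) (by positivity)
  set η := ε * π * ρ / (2 * L) with hη_def
  have hη : 0 < η := by positivity
  refine ⟨1 / π * (L / ρ * (1 / (4 * η))), by positivity, fun w Hw hw hper hHw => ?_⟩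
  have hρε : 1 / π * (2 * ρ) ≤ ε / 2 :=
    calc 1 / π * (2 * ρ) ≤ 1 / π * (2 * (ε * π / 4)) := by gcongr; exact min_le_right _ _
      _ = ε / 2 := by field_simp; norm_num
  have hηε : 1 / π * (L / ρ * η) = ε / 2 := by rw [hη_def]; field_simp
  have hbound := abs_integral_mul_hilbert_le hρ (min_le_left _ _) hη hw hper hHw
  nlinarith [l2NormSq_nonneg hL.le (iteratedDeriv 2 w)]

/-! ### Dissipation for the step-flow velocity -/

/-- The second spatial derivative of `stepFlux f` is the local part of the velocity of the
profile `f`. -/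
noncomputable def stepFlux (f : ℝ → ℝ) : ℝ → ℝ :=
  fun y => (3 * deriv f y + 1 / deriv f y) * iteratedDeriv 2 f y

/-- The right-hand side of the step-flow equation at the profile `f`, where `Hf` stands for the
Hilbert transform of `f'''`. -/
noncomputable def stepVelocity (L : ℝ) (f Hf : ℝ → ℝ) (x : ℝ) : ℝ :=
  -(2 * π / L) * Hf x + iteratedDeriv 2 (stepFlux f) x

/-- `f` is an admissible spatial profile of a solution of the step-flow equation: a `C⁴` function
which decreases by one over each period with slope at most `β / 2`, together with the Hilbert
transform `Hf` of its third derivative. -/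
structure IsStepProfile (L β : ℝ) (f Hf : ℝ → ℝ) : Prop where
  contDiff : ContDiff ℝ 4 f
  add_period : ∀ x, f (x + L) = f x - 1
  deriv_le : ∀ x, deriv f x ≤ β / 2
  hilbert : IsHilbertTransform L (iteratedDeriv 3 f) Hf

theorem abs_three_sub_inv_mul_inv_le {β p q : ℝ} (hβ : β < 0) (hp : p ≤ β / 2) (hq : q ≤ β / 2) :
    |3 - p⁻¹ * q⁻¹| ≤ 3 + 4 / β ^ 2 := by
  have hprod : β ^ 2 / 4 ≤ p * q := by nlinarith
  have hpos : 0 < β ^ 2 / 4 := by nlinarith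
  have hinv : p⁻¹ * q⁻¹ ≤ 4 / β ^ 2 := by
    rw [← mul_inv, ← inv_div]
    exact inv_anti₀ hpos hprod
  have hnonneg : 0 ≤ p⁻¹ * q⁻¹ := by
    rw [← mul_inv]
    exact inv_nonneg.2 (hpos.le.trans hprod)
  rw [abs_le]
  constructor <;> linarith

/-- The flux difference is `(3q + 1/q)(a - b) + (3 - 1/(pq))(p - q)a`, whose first coefficient is
at most `3β/2` and whose second term is absorbed by Young's inequality. -/
theorem sub_mul_flux_sub_le {β M p q a b : ℝ} (hβ : β < 0) (hp : p ≤ β / 2) (hq : q ≤ β / 2)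
    (ha : |a| ≤ M) :
    (a - b) * ((3 * p + 1 / p) * a - (3 * q + 1 / q) * b)
      ≤ 9 * β / 8 * (a - b) ^ 2
        + 2 * ((3 + 4 / β ^ 2) * M) ^ 2 / (-3 * β) * (p - q) ^ 2 := by
  set y := (3 - p⁻¹ * q⁻¹) * a with hy
  have hp₀ : p ≠ 0 := by linarith
  have hq₀ : q ≠ 0 := by linarith
  have hsplit : (a - b) * ((3 * p + 1 / p) * a - (3 * q + 1 / q) * b)
      = (3 * q + q⁻¹) * (a - b) ^ 2 + (a - b) * ((p - q) * y) := by
    rw [hy]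
    field_simp
    ring
  have hcoeff : 3 * q + q⁻¹ ≤ 3 * β / 2 := by
    linarith [inv_nonpos.2 (show q ≤ 0 by linarith)]
  have hy_sq : y ^ 2 ≤ ((3 + 4 / β ^ 2) * M) ^ 2 := by
    rw [← sq_abs, hy, abs_mul]
    gcongr
    exact abs_three_sub_inv_mul_inv_le hβ hp hq
  have hyoung : (a - b) * ((p - q) * y)
      ≤ -(3 * β) / 8 * (a - b) ^ 2 + 2 / (-3 * β) * ((p - q) * y) ^ 2 := by
    refine (le_abs_self _).trans
      ((abs_mul_le_mul_sq_add (show 0 < -(3 * β) / 8 by linarith) _ _).trans_eq ?_)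
    field_simp
    ring
  have hthree : 0 < -3 * β := by linarith
  calc (a - b) * ((3 * p + 1 / p) * a - (3 * q + 1 / q) * b)
      ≤ 3 * β / 2 * (a - b) ^ 2
        + (-(3 * β) / 8 * (a - b) ^ 2 + 2 / (-3 * β) * ((p - q) ^ 2 * y ^ 2)) := by
        rw [hsplit, ← mul_pow]
        gcongr
    _ ≤ 3 * β / 2 * (a - b) ^ 2 + (-(3 * β) / 8 * (a - b) ^ 2
        + 2 / (-3 * β) * ((p - q) ^ 2 * ((3 + 4 / β ^ 2) * M) ^ 2)) := by gcongr
    _ = _ := by ring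

theorem integral_mul_iteratedDeriv_two_of_periodic {L : ℝ} {f g : ℝ → ℝ} (hf : ContDiff ℝ 2 f)
    (hg : ContDiff ℝ 2 g) (hper_f : Function.Periodic f L) (hper_g : Function.Periodic g L) :
    ∫ x in (0 : ℝ)..L, f x * iteratedDeriv 2 g x
      = ∫ x in (0 : ℝ)..L, iteratedDeriv 2 f x * g x := by
  have hderiv₀ : ∀ {h : ℝ → ℝ}, ContDiff ℝ 2 h → ∀ x, HasDerivAt h (iteratedDeriv 1 h x) x :=
    fun hh x => by simpa using hasDerivAt_iteratedDeriv hh (k := 0) (by norm_num) x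
  have hderiv₁ : ∀ {h : ℝ → ℝ}, ContDiff ℝ 2 h →
      ∀ x, HasDerivAt (iteratedDeriv 1 h) (iteratedDeriv 2 h x) x :=
    fun hh x => hasDerivAt_iteratedDeriv hh (by norm_num) x
  have hcont₁ : ∀ {h : ℝ → ℝ}, ContDiff ℝ 2 h → Continuous (iteratedDeriv 1 h) :=
    fun hh => hh.continuous_iteratedDeriv 1 (by norm_num)
  have hcont₂ : ∀ {h : ℝ → ℝ}, ContDiff ℝ 2 h → Continuous (iteratedDeriv 2 h) :=
    fun hh => hh.continuous_iteratedDeriv 2 le_rfl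
  rw [integral_mul_deriv_of_periodic (hderiv₀ hf) (hderiv₁ hg) (hcont₁ hf) (hcont₂ hg) hper_f
      (periodic_iteratedDeriv hper_g 1),
    integral_mul_deriv_of_periodic (hderiv₁ hf) (hderiv₀ hg) (hcont₂ hf) (hcont₁ hg)
      (periodic_iteratedDeriv hper_f 1) hper_g, neg_neg]

namespace IsStepProfile

variable {L β : ℝ} {f Hf g Hg : ℝ → ℝ}

theorem deriv_ne_zero (hf : IsStepProfile L β f Hf) (hβ : β < 0) (x : ℝ) : deriv f x ≠ 0 :=
  ((hf.deriv_le x).trans_lt (by linarith)).ne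

theorem periodic_deriv (hf : IsStepProfile L β f Hf) : Function.Periodic (deriv f) L :=
  periodic_deriv_of_add_eq_add (c := -1) fun x => by rw [hf.add_period, sub_eq_add_neg]

theorem periodic_iteratedDeriv_succ (hf : IsStepProfile L β f Hf) (k : ℕ) :
    Function.Periodic (iteratedDeriv (k + 1) f) L := by
  rw [iteratedDeriv_succ']
  exact periodic_iteratedDeriv hf.periodic_deriv k

theorem periodic_sub (hf : IsStepProfile L β f Hf) (hg : IsStepProfile L β g Hg) :
    Function.Periodic (f - g) L := fun x => by
  simp only [Pi.sub_apply, hf.add_period, hg.add_period, sub_sub_sub_cancel_right]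

theorem continuous_iteratedDeriv (hf : IsStepProfile L β f Hf) {k : ℕ} (hk : k ≤ 4) :
    Continuous (iteratedDeriv k f) :=
  hf.contDiff.continuous_iteratedDeriv k (by exact_mod_cast hk)

theorem hasDerivAt_deriv (hf : IsStepProfile L β f Hf) (x : ℝ) :
    HasDerivAt (deriv f) (iteratedDeriv 2 f x) x := by
  simpa only [iteratedDeriv_one] using
    hasDerivAt_iteratedDeriv hf.contDiff (k := 1) (by norm_num) x

theorem contDiff_stepFlux (hf : IsStepProfile L β f Hf) (hβ : β < 0) :
    ContDiff ℝ 2 (stepFlux f) := by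
  have hderiv : ContDiff ℝ 2 (deriv f) :=
    (hf.contDiff.of_le (by norm_num)).iterate_deriv' 2 1
  have hsecond : ContDiff ℝ 2 (iteratedDeriv 2 f) := by
    rw [iteratedDeriv_eq_iterate]
    exact hf.contDiff.iterate_deriv' 2 2
  exact ((contDiff_const.mul hderiv).add (contDiff_const.div hderiv (hf.deriv_ne_zero hβ))).mul
    hsecond

theorem periodic_stepFlux (hf : IsStepProfile L β f Hf) : Function.Periodic (stepFlux f) L :=
  fun x => by
    simp only [stepFlux, hf.periodic_deriv x, hf.periodic_iteratedDeriv_succ 1 x]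

theorem hilbert_sub (hL : 0 < L) (hf : IsStepProfile L β f Hf) (hg : IsStepProfile L β g Hg) :
    IsHilbertTransform L (iteratedDeriv 3 (f - g)) (Hf - Hg) := by
  have hsub : iteratedDeriv 3 (f - g) = iteratedDeriv 3 f - iteratedDeriv 3 g := by
    funext x
    exact iteratedDeriv_sub (hf.contDiff.of_le (by norm_num)).contDiffAt
      (hg.contDiff.of_le (by norm_num)).contDiffAt
  rw [hsub]
  exact IsHilbertTransform.sub hL (hf.continuous_iteratedDeriv (by norm_num))
    (hg.continuous_iteratedDeriv (by norm_num)) hf.hilbert hg.hilbert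

theorem measurable_hilbert (hL : 0 < L) (hf : IsStepProfile L β f Hf) : Measurable Hf :=
  IsHilbertTransform.measurable hL (hf.continuous_iteratedDeriv (by norm_num)) hf.hilbert

theorem abs_hilbert_le (hL : 0 < L) (hf : IsStepProfile L β f Hf) {N : ℝ}
    (hN : ∀ x, |iteratedDeriv 4 f x| ≤ N) (x : ℝ) : |Hf x| ≤ N * (L / π) :=
  IsHilbertTransform.abs_le hL (hf.continuous_iteratedDeriv (by norm_num))
    (hf.periodic_iteratedDeriv_succ 2)
    (abs_sub_le_of_abs_deriv_le (hasDerivAt_iteratedDeriv hf.contDiff (by norm_num)) hN)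
    hf.hilbert x

theorem exists_abs_iteratedDeriv_four_le (hL : 0 < L) (hf : IsStepProfile L β f Hf) :
    ∃ N, ∀ x, |iteratedDeriv 4 f x| ≤ N :=
  exists_forall_abs_le_of_periodic hL.ne' (hf.continuous_iteratedDeriv le_rfl)
    (hf.periodic_iteratedDeriv_succ 3)

theorem integral_iteratedDeriv_two_mul_stepFlux_sub_le (hL : 0 < L) (hβ : β < 0)
    (hf : IsStepProfile L β f Hf) (hg : IsStepProfile L β g Hg) {M : ℝ}
    (hM : ∀ x, |iteratedDeriv 2 f x| ≤ M) :
    ∫ x in (0 : ℝ)..L, iteratedDeriv 2 (f - g) x * (stepFlux f x - stepFlux g x)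
      ≤ 9 * β / 8 * l2NormSq L (iteratedDeriv 2 (f - g))
        + 2 * ((3 + 4 / β ^ 2) * M) ^ 2 / (-3 * β) * l2NormSq L (iteratedDeriv 1 (f - g)) := by
  have hw : ContDiff ℝ 4 (f - g) := hf.contDiff.sub hg.contDiff
  have hw₁ : Continuous (iteratedDeriv 1 (f - g)) := hw.continuous_iteratedDeriv 1 (by norm_num)
  have hw₂ : Continuous (iteratedDeriv 2 (f - g)) := hw.continuous_iteratedDeriv 2 (by norm_num)
  have hcont_f := (hf.contDiff_stepFlux hβ).continuous
  have hcont_g := (hg.contDiff_stepFlux hβ).continuous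
  simp only [l2NormSq]
  rw [← intervalIntegral.integral_const_mul, ← intervalIntegral.integral_const_mul,
    ← intervalIntegral.integral_add (Continuous.intervalIntegrable (by fun_prop) _ _)
      (Continuous.intervalIntegrable (by fun_prop) _ _)]
  refine intervalIntegral.integral_mono_on hL.le (Continuous.intervalIntegrable (by fun_prop) _ _)
    (Continuous.intervalIntegrable (by fun_prop) _ _) fun x _ => ?_
  have hsub₁ : iteratedDeriv 1 (f - g) x = deriv f x - deriv g x := by
    rw [iteratedDeriv_one]
    exact deriv_sub (hf.contDiff.differentiable (by norm_num) x)
      (hg.contDiff.differentiable (by norm_num) x)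
  have hsub₂ : iteratedDeriv 2 (f - g) x = iteratedDeriv 2 f x - iteratedDeriv 2 g x :=
    iteratedDeriv_sub (hf.contDiff.of_le (by norm_num)).contDiffAt
      (hg.contDiff.of_le (by norm_num)).contDiffAt
  rw [hsub₁, hsub₂]
  exact sub_mul_flux_sub_le hβ (hf.deriv_le x) (hg.deriv_le x) (hM x)

theorem integral_sub_mul_stepVelocity_sub_eq (hL : 0 < L) (hβ : β < 0)
    (hf : IsStepProfile L β f Hf) (hg : IsStepProfile L β g Hg) :
    ∫ x in (0 : ℝ)..L, (f - g) x * (stepVelocity L f Hf x - stepVelocity L g Hg x)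
      = -(2 * π / L) * (∫ x in (0 : ℝ)..L, (f - g) x * (Hf - Hg) x)
        + ∫ x in (0 : ℝ)..L, iteratedDeriv 2 (f - g) x * (stepFlux f x - stepFlux g x) := by
  have hw : ContDiff ℝ 2 (f - g) := (hf.contDiff.sub hg.contDiff).of_le (by norm_num)
  have hflux : ContDiff ℝ 2 (stepFlux f - stepFlux g) :=
    (hf.contDiff_stepFlux hβ).sub (hg.contDiff_stepFlux hβ)
  have hper_flux : Function.Periodic (stepFlux f - stepFlux g) L :=
    hf.periodic_stepFlux.sub hg.periodic_stepFlux
  have hparts := integral_mul_iteratedDeriv_two_of_periodic hw hflux (hf.periodic_sub hg)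
    hper_flux
  have hint_H : IntervalIntegrable (fun x => (f - g) x * (Hf - Hg) x) volume 0 L := by
    obtain ⟨N₁, hN₁⟩ := hf.exists_abs_iteratedDeriv_four_le hL
    obtain ⟨N₂, hN₂⟩ := hg.exists_abs_iteratedDeriv_four_le hL
    refine (intervalIntegrable_of_measurable_of_abs_le (N := N₁ * (L / π) + N₂ * (L / π))
      ((hf.measurable_hilbert hL).sub (hg.measurable_hilbert hL)) fun x => ?_).continuousOn_mul
      hw.continuous.continuousOn
    exact (abs_sub _ _).trans (add_le_add (hf.abs_hilbert_le hL hN₁ x) (hg.abs_hilbert_le hL hN₂ x))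
  have hcont_flux : Continuous (iteratedDeriv 2 (stepFlux f - stepFlux g)) :=
    hflux.continuous_iteratedDeriv 2 le_rfl
  refine Eq.trans ?_ (congrArg _ hparts)
  rw [← intervalIntegral.integral_const_mul, ← intervalIntegral.integral_add
    (hint_H.const_mul _) ((hw.continuous.fun_mul hcont_flux).intervalIntegrable _ _)]
  refine intervalIntegral.integral_congr fun x _ => ?_
  have hsub : iteratedDeriv 2 (stepFlux f - stepFlux g) x
      = iteratedDeriv 2 (stepFlux f) x - iteratedDeriv 2 (stepFlux g) x :=
    iteratedDeriv_sub (hf.contDiff_stepFlux hβ).contDiffAt (hg.contDiff_stepFlux hβ).contDiffAt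
  simp only [stepVelocity, hsub, Pi.sub_apply]
  ring

end IsStepProfile

theorem exists_integral_sub_mul_stepVelocity_sub_le_deriv {L β : ℝ} (hL : 0 < L) (hβ : β < 0)
    (M : ℝ) :
    ∃ B, 0 ≤ B ∧ ∀ f Hf g Hg : ℝ → ℝ, IsStepProfile L β f Hf → IsStepProfile L β g Hg →
      (∀ x, |iteratedDeriv 2 f x| ≤ M) →
      ∫ x in (0 : ℝ)..L, (f - g) x * (stepVelocity L f Hf x - stepVelocity L g Hg x)
        ≤ β / 8 * l2NormSq L (iteratedDeriv 2 (f - g))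
          + B * l2NormSq L (iteratedDeriv 1 (f - g)) := by
  have hβ' : 0 < -β := by linarith
  obtain ⟨C, hC, hhilbert⟩ := exists_abs_integral_mul_hilbert_le hL
    (show 0 < -β * L / (2 * π) by positivity)
  set D := 2 * ((3 + 4 / β ^ 2) * M) ^ 2 / (-3 * β)
  have hD : 0 ≤ D := div_nonneg (by positivity) (by linarith)
  refine ⟨2 * π / L * C + D, by positivity, fun f Hf g Hg hf hg hM => ?_⟩
  have hpair := hhilbert _ _ (hf.contDiff.sub hg.contDiff) (hf.periodic_sub hg)
    (hf.hilbert_sub hL hg)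
  have hflux := hf.integral_iteratedDeriv_two_mul_stepFlux_sub_le hL hβ hg hM
  rw [hf.integral_sub_mul_stepVelocity_sub_eq hL hβ hg]
  set a := l2NormSq L (iteratedDeriv 2 (f - g))
  set b := l2NormSq L (iteratedDeriv 1 (f - g))
  have hhilbert_le : -(2 * π / L) * (∫ x in (0 : ℝ)..L, (f - g) x * (Hf - Hg) x)
      ≤ -β * a + 2 * π / L * C * b :=
    calc -(2 * π / L) * (∫ x in (0 : ℝ)..L, (f - g) x * (Hf - Hg) x)
        ≤ 2 * π / L * (-β * L / (2 * π) * a + C * b) := by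
          rw [neg_mul, ← mul_neg]
          gcongr
          exact (neg_le_abs _).trans hpair
      _ = -β * a + 2 * π / L * C * b := by field_simp
  calc _ ≤ -β * a + 2 * π / L * C * b + (9 * β / 8 * a + D * b) := add_le_add hhilbert_le hflux
    _ = β / 8 * a + (2 * π / L * C + D) * b := by ring

theorem exists_integral_sub_mul_stepVelocity_sub_le {L β : ℝ} (hL : 0 < L) (hβ : β < 0) (M : ℝ) :
    ∃ K, 0 ≤ K ∧ ∀ f Hf g Hg : ℝ → ℝ, IsStepProfile L β f Hf → IsStepProfile L β g Hg →
      (∀ x, |iteratedDeriv 2 f x| ≤ M) →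
      ∫ x in (0 : ℝ)..L, (f - g) x * (stepVelocity L f Hf x - stepVelocity L g Hg x)
        ≤ K * l2NormSq L (f - g) := by
  obtain ⟨B, hB, hderiv_le⟩ := exists_integral_sub_mul_stepVelocity_sub_le_deriv hL hβ M
  have hβ' : 0 < -β := by linarith
  set η := -β / (8 * (B + 1)) with hη_def
  have hη : 0 < η := by positivity
  refine ⟨B * (1 / (4 * η)), by positivity, fun f Hf g Hg hf hg hM => ?_⟩
  have hw : ContDiff ℝ 4 (f - g) := hf.contDiff.sub hg.contDiff
  have hinterp : l2NormSq L (iteratedDeriv 1 (f - g))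
      ≤ η * l2NormSq L (iteratedDeriv 2 (f - g)) + 1 / (4 * η) * l2NormSq L (f - g) :=
    l2NormSq_deriv_le hL.le
      (fun x => by simpa using hasDerivAt_iteratedDeriv hw (k := 0) (by norm_num) x)
      (hasDerivAt_iteratedDeriv hw (by norm_num)) (hw.continuous_iteratedDeriv 2 (by norm_num))
      (hf.periodic_sub hg) (periodic_iteratedDeriv (hf.periodic_sub hg) 1) hη
  set a := l2NormSq L (iteratedDeriv 2 (f - g))
  have ha : 0 ≤ a := l2NormSq_nonneg hL.le _
  have hBη : B * η ≤ -β / 8 := by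
    rw [hη_def, mul_div_assoc', div_le_div_iff₀ (by positivity) (by norm_num)]
    nlinarith
  calc _ ≤ β / 8 * a + B * l2NormSq L (iteratedDeriv 1 (f - g)) := hderiv_le f Hf g Hg hf hg hM
    _ ≤ β / 8 * a + B * (η * a + 1 / (4 * η) * l2NormSq L (f - g)) := by gcongr
    _ = β / 8 * a + B * η * a + B * (1 / (4 * η)) * l2NormSq L (f - g) := by ring
    _ ≤ β / 8 * a + -β / 8 * a + B * (1 / (4 * η)) * l2NormSq L (f - g) := by gcongr
    _ = B * (1 / (4 * η)) * l2NormSq L (f - g) := by ring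

namespace IsStepProfile

variable {L β : ℝ} {f Hf : ℝ → ℝ}

theorem hasDerivAt_stepFlux (hf : IsStepProfile L β f Hf) (hβ : β < 0) (x : ℝ) :
    HasDerivAt (stepFlux f)
      ((3 - (deriv f x)⁻¹ ^ 2) * iteratedDeriv 2 f x ^ 2
        + (3 * deriv f x + (deriv f x)⁻¹) * iteratedDeriv 3 f x) x := by
  have hne := hf.deriv_ne_zero hβ x
  have hflux : stepFlux f = fun y => (3 * deriv f y + (deriv f y)⁻¹) * iteratedDeriv 2 f y := by
    funext y
    rw [stepFlux, one_div]
  rw [hflux]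
  refine ((((hf.hasDerivAt_deriv x).const_mul 3).add ((hf.hasDerivAt_deriv x).inv hne)).mul
    (hasDerivAt_iteratedDeriv hf.contDiff (k := 2) (by norm_num) x)).congr_deriv ?_
  simp only [Pi.add_apply, Pi.inv_apply]
  field_simp
  ring

theorem iteratedDeriv_two_stepFlux (hf : IsStepProfile L β f Hf) (hβ : β < 0) (x : ℝ) :
    iteratedDeriv 2 (stepFlux f) x
      = 2 * (deriv f x)⁻¹ ^ 3 * iteratedDeriv 2 f x ^ 3
        + 3 * (3 - (deriv f x)⁻¹ ^ 2) * iteratedDeriv 2 f x * iteratedDeriv 3 f x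
        + (3 * deriv f x + (deriv f x)⁻¹) * iteratedDeriv 4 f x := by
  have hne := hf.deriv_ne_zero hβ x
  have hderiv := hf.hasDerivAt_deriv x
  have hsecond := hasDerivAt_iteratedDeriv hf.contDiff (k := 2) (by norm_num) x
  have hthird := hasDerivAt_iteratedDeriv hf.contDiff (k := 3) (by norm_num) x
  rw [iteratedDeriv_succ, iteratedDeriv_one, funext fun y => (hf.hasDerivAt_stepFlux hβ y).deriv]
  refine (((((hderiv.inv hne).pow 2).const_sub 3).mul (hsecond.pow 2)).add
    (((hderiv.const_mul 3).add (hderiv.inv hne)).mul hthird)).deriv.trans ?_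
  simp only [Pi.add_apply, Pi.inv_apply, Pi.pow_apply, Nat.add_one_sub_one, pow_one]
  push_cast
  field_simp
  ring

theorem abs_iteratedDeriv_three_le (hL : 0 < L) (hf : IsStepProfile L β f Hf) {N : ℝ}
    (hN : ∀ x, |iteratedDeriv 4 f x| ≤ N) (x : ℝ) : |iteratedDeriv 3 f x| ≤ N * L :=
  abs_deriv_le_of_periodic hL (hasDerivAt_iteratedDeriv hf.contDiff (k := 2) (by norm_num))
    (hasDerivAt_iteratedDeriv hf.contDiff (by norm_num)) (hf.periodic_iteratedDeriv_succ 1) hN x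

theorem abs_iteratedDeriv_two_le (hL : 0 < L) (hf : IsStepProfile L β f Hf) {N : ℝ}
    (hN : ∀ x, |iteratedDeriv 4 f x| ≤ N) (x : ℝ) : |iteratedDeriv 2 f x| ≤ N * L * L :=
  abs_deriv_le_of_periodic hL (hasDerivAt_iteratedDeriv hf.contDiff (k := 1) (by norm_num))
    (hasDerivAt_iteratedDeriv hf.contDiff (by norm_num)) (hf.periodic_iteratedDeriv_succ 0)
    (hf.abs_iteratedDeriv_three_le hL hN) x

theorem abs_deriv_le (hL : 0 < L) (hf : IsStepProfile L β f Hf) {N : ℝ}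
    (hN : ∀ x, |iteratedDeriv 4 f x| ≤ N) (x : ℝ) : |deriv f x| ≤ N * L * L * L + 1 / L := by
  have hmean : |deriv f x + 1 / L| ≤ N * L * L * L :=
    abs_deriv_le_of_periodic (f := fun y => f y + y / L) hL
      (fun y => (hf.contDiff.differentiable (by norm_num) y).hasDerivAt.add
        ((hasDerivAt_id y).div_const L))
      (fun y => (hf.hasDerivAt_deriv y).add_const _)
      (fun y => by simp only [hf.add_period]; field_simp; ring)
      (hf.abs_iteratedDeriv_two_le hL hN) x
  calc |deriv f x| = |deriv f x + 1 / L - 1 / L| := by rw [add_sub_cancel_right]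
    _ ≤ |deriv f x + 1 / L| + |1 / L| := abs_sub _ _
    _ ≤ N * L * L * L + 1 / L := by rw [abs_of_pos (one_div_pos.2 hL)]; gcongr

theorem abs_inv_deriv_le (hβ : β < 0) (hf : IsStepProfile L β f Hf) (x : ℝ) :
    |(deriv f x)⁻¹| ≤ 2 / -β := by
  have hslope := hf.deriv_le x
  rw [abs_inv, abs_of_neg (by linarith), ← inv_div]
  exact inv_anti₀ (by linarith) (by linarith)

end IsStepProfile

theorem abs_flux_second_deriv_le {p i q r k P I Q R N : ℝ} (hp : |p| ≤ P) (hi : |i| ≤ I)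
    (hq : |q| ≤ Q) (hr : |r| ≤ R) (hk : |k| ≤ N) :
    |2 * i ^ 3 * q ^ 3 + 3 * (3 - i ^ 2) * q * r + (3 * p + i) * k|
      ≤ 2 * I ^ 3 * Q ^ 3 + 3 * (3 + I ^ 2) * Q * R + (3 * P + I) * N := by
  have hsub : |3 - i ^ 2| ≤ 3 + |i| ^ 2 := by
    simpa only [← abs_pow, Nat.abs_ofNat] using abs_sub (3 : ℝ) (i ^ 2)
  have hadd : |3 * p + i| ≤ 3 * |p| + |i| := by
    simpa only [abs_mul, Nat.abs_ofNat] using abs_add_le (3 * p) i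
  calc |2 * i ^ 3 * q ^ 3 + 3 * (3 - i ^ 2) * q * r + (3 * p + i) * k|
      ≤ |2 * i ^ 3 * q ^ 3| + |3 * (3 - i ^ 2) * q * r| + |(3 * p + i) * k| := abs_add_three _ _ _
    _ = 2 * |i| ^ 3 * |q| ^ 3 + 3 * |3 - i ^ 2| * |q| * |r| + |3 * p + i| * |k| := by
        simp only [abs_mul, abs_pow, Nat.abs_ofNat]
    _ ≤ 2 * |i| ^ 3 * |q| ^ 3 + 3 * (3 + |i| ^ 2) * |q| * |r| + (3 * |p| + |i|) * |k| := by gcongr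
    _ ≤ 2 * I ^ 3 * Q ^ 3 + 3 * (3 + I ^ 2) * Q * R + (3 * P + I) * N := by
        have hI := (abs_nonneg _).trans hi
        have hP := (abs_nonneg _).trans hp
        have hQ := (abs_nonneg _).trans hq
        gcongr

theorem exists_abs_stepVelocity_le {L β : ℝ} (hL : 0 < L) (hβ : β < 0) (N : ℝ) :
    ∃ N', ∀ f Hf : ℝ → ℝ, IsStepProfile L β f Hf → (∀ x, |iteratedDeriv 4 f x| ≤ N) →
      ∀ x, |stepVelocity L f Hf x| ≤ N' := by
  refine ⟨2 * π / L * (N * (L / π)) + (2 * (2 / -β) ^ 3 * (N * L * L) ^ 3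
    + 3 * (3 + (2 / -β) ^ 2) * (N * L * L) * (N * L)
    + (3 * (N * L * L * L + 1 / L) + 2 / -β) * N), fun f Hf hf hN x => ?_⟩
  refine (abs_add_le _ _).trans (add_le_add ?_ ?_)
  · rw [abs_mul, abs_neg, abs_of_pos (by positivity : 0 < 2 * π / L)]
    gcongr
    exact hf.abs_hilbert_le hL hN x
  · rw [hf.iteratedDeriv_two_stepFlux hβ]
    exact abs_flux_second_deriv_le (hf.abs_deriv_le hL hN x) (hf.abs_inv_deriv_le hβ x)
      (hf.abs_iteratedDeriv_two_le hL hN x) (hf.abs_iteratedDeriv_three_le hL hN x) (hN x)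

/-! ### Forward differences and closedness of derivative bounds -/

theorem exists_fwdDiff_iter_eq {k : ℕ} {f : ℝ → ℝ} (hf : ContDiff ℝ k f) {s : ℝ} (hs : 0 < s)
    (x : ℝ) : ∃ ξ ∈ Set.Icc x (x + k * s), (fwdDiff s)^[k] f x = iteratedDeriv k f ξ * s ^ k := by
  induction k generalizing f with
  | zero => exact ⟨x, by simp, by simp⟩
  | succ k ih =>
    have hk : ContDiff ℝ k f := hf.of_le (by exact_mod_cast k.le_succ)
    have hcomp : ContDiff ℝ k fun y => f (y + s) := hk.comp (contDiff_id.add contDiff_const)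
    obtain ⟨ξ, hξ, hdiff⟩ := ih (f := fwdDiff s f) (hcomp.sub hk)
    have hderiv : ∀ y, HasDerivAt (iteratedDeriv k f) (iteratedDeriv (k + 1) f y) y :=
      hasDerivAt_iteratedDeriv hf (by exact_mod_cast k.lt_succ_self)
    have hcont : Continuous (iteratedDeriv k f) := hk.continuous_iteratedDeriv k le_rfl
    obtain ⟨ζ, hζ, hslope⟩ := exists_hasDerivAt_eq_slope _ _ (lt_add_of_pos_right ξ hs)
      hcont.continuousOn fun y _ => hderiv y
    have hshift : iteratedDeriv k (fwdDiff s f) ξ = iteratedDeriv (k + 1) f ζ * s := by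
      rw [hslope, add_sub_cancel_left, div_mul_cancel₀ _ hs.ne',
        ← congrFun (iteratedDeriv_comp_add_const k f s) ξ]
      exact iteratedDeriv_sub hcomp.contDiffAt hk.contDiffAt
    refine ⟨ζ, ⟨hξ.1.trans hζ.1.le, hζ.2.le.trans ?_⟩, ?_⟩
    · push_cast
      linarith [hξ.2]
    · rw [Function.iterate_succ_apply, hdiff, hshift, pow_succ']
      ring

theorem forall_abs_iteratedDeriv_le_iff {k : ℕ} {f : ℝ → ℝ} (hf : ContDiff ℝ k f) {N : ℝ} :
    (∀ x, |iteratedDeriv k f x| ≤ N) ↔ ∀ x, ∀ s > 0, |(fwdDiff s)^[k] f x| ≤ N * s ^ k := by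
  constructor
  · intro hN x s hs
    obtain ⟨ξ, -, hξ⟩ := exists_fwdDiff_iter_eq hf hs x
    rw [hξ, abs_mul, abs_of_pos (pow_pos hs k)]
    gcongr
    exact hN ξ
  · intro hN x
    choose! ξ hξ_mem hξ using fun s (hs : 0 < s) => exists_fwdDiff_iter_eq hf hs x
    have hpos : ∀ᶠ s in 𝓝[>] (0 : ℝ), 0 < s := self_mem_nhdsWithin
    have hupper : Tendsto (fun s : ℝ => x + k * s) (𝓝[>] 0) (𝓝 x) :=
      (Continuous.tendsto' (by fun_prop) _ _ (by simp)).mono_left nhdsWithin_le_nhds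
    have hξ_lim : Tendsto ξ (𝓝[>] 0) (𝓝 x) :=
      tendsto_of_tendsto_of_tendsto_of_le_of_le' tendsto_const_nhds hupper
        (hpos.mono fun s hs => (hξ_mem s hs).1) (hpos.mono fun s hs => (hξ_mem s hs).2)
    refine le_of_tendsto (((hf.continuous_iteratedDeriv k le_rfl).tendsto x).comp hξ_lim).abs ?_
    filter_upwards [hpos] with s hs
    have hdiff := hN x s hs
    rw [hξ s hs, abs_mul, abs_of_pos (pow_pos hs k)] at hdiff
    exact le_of_mul_le_mul_right hdiff (pow_pos hs k)

/-- Pointwise convergence alone suffices to pass to the limit in forward differences, hence in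
bounds on derivatives. -/
theorem isClosed_setOf_abs_iteratedDeriv_le {X : Type*} [TopologicalSpace X] {S : Set X}
    (hS : IsClosed S) {k : ℕ} {u : X → ℝ → ℝ} (hcont : ∀ x, Continuous fun t => u t x)
    (hu : ∀ t ∈ S, ContDiff ℝ k (u t)) (N : ℝ) :
    IsClosed {t ∈ S | ∀ x, |iteratedDeriv k (u t) x| ≤ N} := by
  have hset : {t ∈ S | ∀ x, |iteratedDeriv k (u t) x| ≤ N}
      = S ∩ {t | ∀ x, ∀ s > 0, |(fwdDiff s)^[k] (u t) x| ≤ N * s ^ k} := by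
    ext t
    exact and_congr_right fun ht => forall_abs_iteratedDeriv_le_iff (hu t ht)
  rw [hset]
  refine hS.inter ?_
  simp only [fwdDiff_iter_eq_sum_shift, Set.ofPred_forall]
  refine isClosed_iInter fun x => isClosed_iInter fun s => isClosed_iInter fun _ => ?_
  exact isClosed_le (by fun_prop) continuous_const

/-! ### Pointwise right derivatives and the `L²` norm -/

theorem l2NormSq_smul (L a : ℝ) (f : ℝ → ℝ) : l2NormSq L (a • f) = a ^ 2 * l2NormSq L f := by
  simp only [l2NormSq, Pi.smul_apply, smul_eq_mul, mul_pow, intervalIntegral.integral_const_mul]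

theorem l2NormSq_add (L : ℝ) {f g : ℝ → ℝ} (hf : Continuous f) (hg : Continuous g) :
    l2NormSq L (f + g) = l2NormSq L f + 2 * (∫ x in (0 : ℝ)..L, f x * g x) + l2NormSq L g := by
  have hint {φ : ℝ → ℝ} (hφ : Continuous φ) : IntervalIntegrable φ volume 0 L :=
    hφ.intervalIntegrable _ _
  simp only [l2NormSq, Pi.add_apply, add_sq, mul_assoc]
  rw [intervalIntegral.integral_add (hint (by fun_prop)) (hint (by fun_prop)),
    intervalIntegral.integral_add (hint (by fun_prop)) (hint (by fun_prop)),
    intervalIntegral.integral_const_mul]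

/-- Truncation of `y` to the interval `[-k, k]`. -/
def truncate (k y : ℝ) : ℝ :=
  max (-k) (min k y)

theorem continuous_truncate (k : ℝ) : Continuous (truncate k) := by
  unfold truncate
  fun_prop

theorem abs_truncate_le {k : ℝ} (hk : 0 ≤ k) (y : ℝ) : |truncate k y| ≤ k :=
  abs_le.2 ⟨le_max_left _ _, max_le (by linarith) (min_le_left _ _)⟩

theorem truncate_of_abs_le {k y : ℝ} (hy : |y| ≤ k) : truncate k y = y := by
  rw [truncate, min_eq_right (abs_le.1 hy).2, max_eq_right (abs_le.1 hy).1]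

theorem abs_sub_truncate_le {k : ℝ} (hk : 0 < k) (y : ℝ) : |y - truncate k y| ≤ y ^ 2 / k := by
  rw [le_div_iff₀ hk]
  rcases le_total |y| k with hy | hy
  · rw [truncate_of_abs_le hy, sub_self, abs_zero, zero_mul]
    exact sq_nonneg y
  · have hbound : |y - truncate k y| ≤ |y| := by
      unfold truncate
      grind
    nlinarith [sq_abs y, abs_nonneg y]

theorem tendsto_integral_mul_truncate {ι : Type*} {l : Filter ι} [l.IsCountablyGenerated]
    {L k : ℝ} {q : ι → ℝ → ℝ} {F φ : ℝ → ℝ} (hq : ∀ i, Continuous (q i)) (hφ : Continuous φ)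
    (hF : ∀ x, |F x| ≤ k) (hlim : ∀ x, Tendsto (fun i => q i x) l (𝓝 (F x))) :
    Tendsto (fun i => ∫ x in (0 : ℝ)..L, φ x * truncate k (q i x)) l
      (𝓝 (∫ x in (0 : ℝ)..L, φ x * F x)) := by
  have hk : 0 ≤ k := (abs_nonneg _).trans (hF 0)
  refine intervalIntegral.tendsto_integral_filter_of_dominated_convergence (fun x => |φ x| * k)
    (.of_forall fun i => ?_) (.of_forall fun i => .of_forall fun x _ => ?_)
    (Continuous.intervalIntegrable (by fun_prop) _ _) (.of_forall fun x _ => ?_)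
  · exact (hφ.mul ((continuous_truncate k).comp (hq i))).aestronglyMeasurable
  · rw [norm_mul]
    exact mul_le_mul_of_nonneg_left (abs_truncate_le hk _) (norm_nonneg _)
  · have hlim_trunc := ((continuous_truncate k).tendsto (F x)).comp (hlim x)
    rw [truncate_of_abs_le (hF x)] at hlim_trunc
    exact hlim_trunc.const_mul _

theorem abs_integral_mul_sub_truncate_le {L k Φ : ℝ} (hL : 0 ≤ L) (hk : 0 < k) {q φ : ℝ → ℝ}
    (hq : Continuous q) (hφ : Continuous φ) (hΦ : ∀ x ∈ Set.Icc 0 L, |φ x| ≤ Φ) :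
    |(∫ x in (0 : ℝ)..L, φ x * q x) - ∫ x in (0 : ℝ)..L, φ x * truncate k (q x)|
      ≤ Φ / k * l2NormSq L q := by
  have htrunc : Continuous fun x => truncate k (q x) := (continuous_truncate k).comp hq
  rw [← intervalIntegral.integral_sub (Continuous.intervalIntegrable (by fun_prop) _ _)
    (Continuous.intervalIntegrable (by fun_prop) _ _), l2NormSq,
    ← intervalIntegral.integral_const_mul]
  refine (intervalIntegral.abs_integral_le_integral_abs hL).trans ?_
  refine intervalIntegral.integral_mono_on hL (Continuous.intervalIntegrable (by fun_prop) _ _)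
    (Continuous.intervalIntegrable (by fun_prop) _ _) fun x hx => ?_
  calc |φ x * q x - φ x * truncate k (q x)| = |φ x| * |q x - truncate k (q x)| := by
        rw [← mul_sub, abs_mul]
    _ ≤ Φ * (q x ^ 2 / k) := mul_le_mul (hΦ x hx) (abs_sub_truncate_le hk _) (abs_nonneg _)
        ((abs_nonneg _).trans (hΦ x hx))
    _ = Φ / k * q x ^ 2 := by ring

theorem tendsto_integral_mul_of_l2NormSq_le {ι : Type*} {l : Filter ι} [l.IsCountablyGenerated]
    [l.NeBot] {L N C : ℝ} (hL : 0 ≤ L) {q : ι → ℝ → ℝ} {F φ : ℝ → ℝ} (hq : ∀ i, Continuous (q i))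
    (hφ : Continuous φ) (hF : ∀ x, |F x| ≤ N) (hlim : ∀ x, Tendsto (fun i => q i x) l (𝓝 (F x)))
    (hC : ∀ᶠ i in l, l2NormSq L (q i) ≤ C) :
    Tendsto (fun i => ∫ x in (0 : ℝ)..L, φ x * q i x) l (𝓝 (∫ x in (0 : ℝ)..L, φ x * F x)) := by
  obtain ⟨Φ, hΦ⟩ := (isCompact_Icc (a := (0 : ℝ)) (b := L)).exists_bound_of_continuousOn
    hφ.continuousOn
  have hΦ0 : 0 ≤ Φ := (norm_nonneg _).trans (hΦ 0 ⟨le_rfl, hL⟩)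
  have hN0 : 0 ≤ N := (abs_nonneg _).trans (hF 0)
  obtain ⟨_, hi⟩ := hC.exists
  have hC0 : 0 ≤ C := (l2NormSq_nonneg hL _).trans hi
  rw [Metric.tendsto_nhds]
  intro η hη
  obtain ⟨k, hk, hNk, herror⟩ : ∃ k > 0, N ≤ k ∧ Φ / k * C < η / 2 := by
    have hnonneg : 0 ≤ 2 * Φ * C / η := by positivity
    refine ⟨N + 2 * Φ * C / η + 1, by positivity, by linarith, ?_⟩
    rw [div_mul_eq_mul_div, div_lt_iff₀ (by positivity)]
    have hcancel : η / 2 * (2 * Φ * C / η) = Φ * C := by field_simp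
    nlinarith
  have htrunc := tendsto_integral_mul_truncate (L := L) hq hφ (fun x => (hF x).trans hNk) hlim
  filter_upwards [Metric.tendsto_nhds.1 htrunc (η / 2) (half_pos hη), hC] with i hi hCi
  have hdiff := abs_integral_mul_sub_truncate_le hL hk (hq i) hφ hΦ
  have hdiff_lt : Φ / k * l2NormSq L (q i) < η / 2 := lt_of_le_of_lt (by gcongr) herror
  rw [← Real.dist_eq] at hdiff
  linarith [dist_triangle (∫ x in (0 : ℝ)..L, φ x * q i x)
    (∫ x in (0 : ℝ)..L, φ x * truncate k (q i x)) (∫ x in (0 : ℝ)..L, φ x * F x)]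

theorem slope_l2NormSq (L : ℝ) {u : ℝ → ℝ → ℝ} (hu : ∀ t, Continuous (u t)) {t t' : ℝ}
    (hne : t ≠ t') :
    slope (fun τ => l2NormSq L (u τ)) t t'
      = 2 * (∫ x in (0 : ℝ)..L, u t x * slope u t t' x)
        + (t' - t) * l2NormSq L (slope u t t') := by
  have hslope : Continuous (slope u t t') := ((hu t').sub (hu t)).const_smul _
  have hu_t' : u t' = u t + (t' - t) • slope u t t' := by
    rw [sub_smul_slope, vsub_eq_sub, add_sub_cancel]
  have hexpand := l2NormSq_add L (hu t) (hslope.const_smul (t' - t))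
  simp only [Pi.smul_apply, smul_eq_mul, mul_left_comm _ (t' - t),
    intervalIntegral.integral_const_mul] at hexpand
  rw [slope_def_field, div_eq_iff (sub_ne_zero.2 hne.symm), hu_t', hexpand, l2NormSq_smul]
  ring

/-- Quadratic control of the forward time increments of the curve `u` in `L²(0, L)` at time `t`.
Together with a pointwise right derivative it makes the energy right differentiable at `t`. -/
def IsL2RightLipschitzAt (L : ℝ) (u : ℝ → ℝ → ℝ) (t : ℝ) : Prop :=
  ∃ C, ∀ᶠ t' in 𝓝[>] t, l2NormSq L (u t' - u t) ≤ C * (t' - t) ^ 2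

namespace IsL2RightLipschitzAt

theorem sub {L t : ℝ} {u v : ℝ → ℝ → ℝ} (hL : 0 ≤ L) (hu : ∀ t, Continuous (u t))
    (hv : ∀ t, Continuous (v t)) (hLip_u : IsL2RightLipschitzAt L u t)
    (hLip_v : IsL2RightLipschitzAt L v t) : IsL2RightLipschitzAt L (u - v) t := by
  obtain ⟨C, hC⟩ := hLip_u
  obtain ⟨D, hD⟩ := hLip_v
  refine ⟨2 * C + 2 * D, ?_⟩
  filter_upwards [hC, hD] with t' hCt hDt
  have hsplit : (u - v) t' - (u - v) t = (u t' - u t) + (v t - v t') := by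
    simp only [Pi.sub_apply]
    abel
  have hadd := l2NormSq_add_le hL ((hu t').sub (hu t)) ((hv t).sub (hv t'))
  rw [l2NormSq_sub_comm L (v t)] at hadd
  rw [hsplit]
  linarith

theorem sub_const {L t : ℝ} {u : ℝ → ℝ → ℝ} (hLip : IsL2RightLipschitzAt L u t) (f : ℝ → ℝ) :
    IsL2RightLipschitzAt L (fun τ => u τ - f) t := by
  simpa only [IsL2RightLipschitzAt, sub_sub_sub_cancel_right] using hLip

theorem eventually_l2NormSq_slope_le {L t : ℝ} {u : ℝ → ℝ → ℝ}
    (hLip : IsL2RightLipschitzAt L u t) :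
    ∃ C, ∀ᶠ t' in 𝓝[>] t, l2NormSq L (slope u t t') ≤ C := by
  obtain ⟨C, hC⟩ := hLip
  refine ⟨C, ?_⟩
  filter_upwards [hC, self_mem_nhdsWithin] with t' hCt (hlt : t < t')
  have hpos : 0 < (t' - t) ^ 2 := pow_pos (sub_pos.2 hlt) 2
  rw [← vsub_eq_sub (u t'), ← sub_smul_slope u t t', l2NormSq_smul, mul_comm C] at hCt
  exact le_of_mul_le_mul_left hCt hpos

/-- The difference quotients converge to `F` only pointwise in `x`; the `L²` bound on them upgrades
this to weak convergence against the continuous function `u t`. -/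
theorem hasDerivWithinAt_l2NormSq {L N t : ℝ} {u : ℝ → ℝ → ℝ} {F : ℝ → ℝ} (hL : 0 ≤ L)
    (hu : ∀ t, Continuous (u t)) (hF : ∀ x, HasDerivWithinAt (fun τ => u τ x) (F x) (Set.Ici t) t)
    (hbound : ∀ x, |F x| ≤ N) (hLip : IsL2RightLipschitzAt L u t) :
    HasDerivWithinAt (fun τ => l2NormSq L (u τ)) (2 * ∫ x in (0 : ℝ)..L, u t x * F x)
      (Set.Ici t) t := by
  have hslope_cont (t' : ℝ) : Continuous (slope u t t') := ((hu t').sub (hu t)).const_smul _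
  obtain ⟨C, hC⟩ := hLip.eventually_l2NormSq_slope_le
  have hweak : Tendsto (fun t' => ∫ x in (0 : ℝ)..L, u t x * slope u t t' x) (𝓝[>] t)
      (𝓝 (∫ x in (0 : ℝ)..L, u t x * F x)) := by
    refine tendsto_integral_mul_of_l2NormSq_le hL hslope_cont (hu t) hbound (fun x => ?_) hC
    have hx := hasDerivWithinAt_iff_tendsto_slope.1 (hF x)
    rwa [Set.Ici_sdiff_left] at hx
  have hquad : Tendsto (fun t' => (t' - t) * l2NormSq L (slope u t t')) (𝓝[>] t) (𝓝 0) := by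
    have hzero : Tendsto (fun t' => (t' - t) * C) (𝓝[>] t) (𝓝 0) :=
      tendsto_nhdsWithin_of_tendsto_nhds <| Continuous.tendsto' (by fun_prop) _ _ (by simp)
    refine squeeze_zero' ?_ ?_ hzero
    · filter_upwards [self_mem_nhdsWithin] with t' (hlt : t < t')
      exact mul_nonneg (sub_nonneg.2 hlt.le) (l2NormSq_nonneg hL _)
    · filter_upwards [self_mem_nhdsWithin, hC] with t' (hlt : t < t') hCt
      exact mul_le_mul_of_nonneg_left hCt (sub_nonneg.2 hlt.le)
  rw [hasDerivWithinAt_iff_tendsto_slope, Set.Ici_sdiff_left, ← add_zero (2 * _)]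
  refine ((hweak.const_mul 2).add hquad).congr' ?_
  filter_upwards [self_mem_nhdsWithin] with t' (hlt : t < t')
  exact (slope_l2NormSq L hu hlt.ne).symm

end IsL2RightLipschitzAt

/-! ### Dissipative evolutions -/

theorem le_gronwallBound_of_hasDerivWithinAt {f f' : ℝ → ℝ} {a b K ε : ℝ} (hf : Continuous f)
    (hab : a ≤ b) (hf' : ∀ t ∈ Set.Ioo a b, HasDerivWithinAt f (f' t) (Set.Ici t) t)
    (hbound : ∀ t ∈ Set.Ioo a b, f' t ≤ K * f t + ε) :
    f b ≤ gronwallBound (f a) K ε (b - a) := by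
  rcases hab.eq_or_lt with rfl | hlt
  · rw [sub_self, gronwallBound_x0]
  have hfrom (c : ℝ) (hc : c ∈ Set.Ioo a b) : f b ≤ gronwallBound (f c) K ε (b - c) := by
    refine le_gronwallBound_of_liminf_deriv_right_le (f' := f') hf.continuousOn
      (fun t ht r hr => ?_) le_rfl (fun t ht => hbound t ⟨hc.1.trans_le ht.1, ht.2⟩) b
      ⟨hc.2.le, le_rfl⟩
    simpa only [slope_def_field, div_eq_inv_mul] using
      (hf' t ⟨hc.1.trans_le ht.1, ht.2⟩).liminf_right_slope_le hr
  have hcont : Continuous fun c => gronwallBound (f c) K ε (b - c) := by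
    unfold gronwallBound
    split_ifs <;> fun_prop
  exact ge_of_tendsto (tendsto_nhdsWithin_of_tendsto_nhds (hcont.tendsto a))
    (Filter.mem_of_superset (Ioo_mem_nhdsGT hlt) hfrom)

theorem gronwallBound_zero_le {K B τ : ℝ} (hK : 0 ≤ K) (hB : 0 ≤ B) (hτ : 0 < τ) (hτ1 : τ ≤ 1) :
    gronwallBound 0 (2 * K + 1 / τ) (τ * B) τ ≤ B * exp (2 * K + 1) * τ ^ 2 := by
  set K' := 2 * K + 1 / τ with hK'
  have hK'_pos : 0 < K' := by positivity
  have hexponent : K' * τ ≤ 2 * K + 1 := by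
    rw [hK', add_mul, one_div_mul_cancel hτ.ne']
    nlinarith
  have hinv : 1 / K' ≤ τ := (one_div_le hK'_pos hτ).2 (by rw [hK']; linarith)
  have hexp : exp (K' * τ) - 1 ≤ exp (2 * K + 1) := by linarith [exp_le_exp.2 hexponent]
  have hexp_nonneg : 0 ≤ exp (K' * τ) - 1 := by
    linarith [one_le_exp (show 0 ≤ K' * τ by positivity)]
  rw [gronwallBound_of_K_ne_0 hK'_pos.ne']
  calc 0 * exp (K' * τ) + τ * B / K' * (exp (K' * τ) - 1)
      = τ * B * (1 / K') * (exp (K' * τ) - 1) := by ring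
    _ ≤ τ * B * τ * exp (2 * K + 1) := by gcongr
    _ = B * exp (2 * K + 1) * τ ^ 2 := by ring

theorem integral_mul_le_of_abs_le {L N η : ℝ} (hL : 0 ≤ L) (hη : 0 < η) {w G : ℝ → ℝ}
    (hw : Continuous w) (hG : Measurable G) (hN : ∀ x, |G x| ≤ N) :
    ∫ x in (0 : ℝ)..L, w x * G x ≤ η * l2NormSq L w + 1 / (4 * η) * N ^ 2 * L := by
  have hint : IntervalIntegrable (fun x => w x * G x) volume 0 L :=
    (intervalIntegrable_of_measurable_of_abs_le hG hN).continuousOn_mul hw.continuousOn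
  calc ∫ x in (0 : ℝ)..L, w x * G x
      ≤ ∫ x in (0 : ℝ)..L, (η * w x ^ 2 + 1 / (4 * η) * N ^ 2) := by
        refine intervalIntegral.integral_mono_on hL hint
          (Continuous.intervalIntegrable (by fun_prop) _ _) fun x _ => ?_
        have hsq : G x ^ 2 ≤ N ^ 2 := sq_le_sq.2 ((hN x).trans (le_abs_self N))
        have hyoung := (le_abs_self _).trans (abs_mul_le_mul_sq_add hη (w x) (G x))
        have : 1 / (4 * η) * G x ^ 2 ≤ 1 / (4 * η) * N ^ 2 := by gcongr
        linarith
    _ = η * l2NormSq L w + 1 / (4 * η) * N ^ 2 * L := by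
        rw [intervalIntegral.integral_add (Continuous.intervalIntegrable (by fun_prop) _ _)
          (Continuous.intervalIntegrable (by fun_prop) _ _), intervalIntegral.integral_const_mul,
          intervalIntegral.integral_const, l2NormSq, smul_eq_mul]
        ring

/-- A jointly continuous curve `t ↦ u t` of functions on the line which at each time `t ∈ [0, T)`
has the bounded function `F t` as its right derivative, pointwise in space. Nothing is assumed
about the dependence of `F t` on `t`. -/
structure IsPointwiseEvolution (T : ℝ) (u F : ℝ → ℝ → ℝ) : Prop where
  continuous_uncurry : Continuous (Function.uncurry u)
  hasDerivWithinAt : ∀ t ∈ Set.Ico 0 T, ∀ x,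
    HasDerivWithinAt (fun τ => u τ x) (F t x) (Set.Ici t) t
  exists_abs_le : ∀ t ∈ Set.Ico 0 T, ∃ N, ∀ x, |F t x| ≤ N

namespace IsPointwiseEvolution

variable {T t : ℝ} {u v F G : ℝ → ℝ → ℝ}

theorem continuous (hu : IsPointwiseEvolution T u F) (t : ℝ) : Continuous (u t) :=
  hu.continuous_uncurry.comp (Continuous.prodMk_right t)

theorem measurable (hu : IsPointwiseEvolution T u F) (ht : t ∈ Set.Ico 0 T) :
    Measurable (F t) := by
  refine measurable_of_tendsto_metrizable' (𝓝[>] t) (f := fun t' => slope u t t')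
    (fun t' => (((hu.continuous t').sub (hu.continuous t)).const_smul _).measurable)
    (tendsto_pi_nhds.2 fun x => ?_)
  have hx := hasDerivWithinAt_iff_tendsto_slope.1 (hu.hasDerivWithinAt t ht x)
  rwa [Set.Ici_sdiff_left] at hx

theorem intervalIntegrable_mul (hu : IsPointwiseEvolution T u F) (ht : t ∈ Set.Ico 0 T)
    {φ : ℝ → ℝ} (hφ : Continuous φ) (a b : ℝ) :
    IntervalIntegrable (fun x => φ x * F t x) volume a b := by
  obtain ⟨N, hN⟩ := hu.exists_abs_le t ht
  exact (intervalIntegrable_of_measurable_of_abs_le (hu.measurable ht) hN).continuousOn_mul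
    hφ.continuousOn

theorem sub (hu : IsPointwiseEvolution T u F) (hv : IsPointwiseEvolution T v G) :
    IsPointwiseEvolution T (u - v) (F - G) where
  continuous_uncurry := hu.continuous_uncurry.sub hv.continuous_uncurry
  hasDerivWithinAt t ht x := (hu.hasDerivWithinAt t ht x).sub (hv.hasDerivWithinAt t ht x)
  exists_abs_le t ht := by
    obtain ⟨N, hN⟩ := hu.exists_abs_le t ht
    obtain ⟨N', hN'⟩ := hv.exists_abs_le t ht
    exact ⟨N + N', fun x => (abs_sub _ _).trans (add_le_add (hN x) (hN' x))⟩

theorem sub_const (hu : IsPointwiseEvolution T u F) {f : ℝ → ℝ} (hf : Continuous f) :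
    IsPointwiseEvolution T (fun τ => u τ - f) F where
  continuous_uncurry := hu.continuous_uncurry.sub (hf.comp continuous_snd)
  hasDerivWithinAt t ht x := (hu.hasDerivWithinAt t ht x).sub_const (f x)
  exists_abs_le := hu.exists_abs_le

theorem hasDerivWithinAt_l2NormSq {L : ℝ} (hL : 0 ≤ L) (hu : IsPointwiseEvolution T u F)
    (ht : t ∈ Set.Ico 0 T) (hLip : IsL2RightLipschitzAt L u t) :
    HasDerivWithinAt (fun τ => l2NormSq L (u τ)) (2 * ∫ x in (0 : ℝ)..L, u t x * F t x)
      (Set.Ici t) t :=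
  let ⟨_, hN⟩ := hu.exists_abs_le t ht
  hLip.hasDerivWithinAt_l2NormSq hL hu.continuous (hu.hasDerivWithinAt t ht) hN

end IsPointwiseEvolution

/-- The right derivative `F` of the curve `u` is bounded by `N` at the times of `A`, and is
one-sided Lipschitz in `L²(0, L)` with constant `K` between the times of `A` and any other time
in `[0, T)`. -/
structure IsUniformlyDissipativeOn (L T K N : ℝ) (u F : ℝ → ℝ → ℝ) (A : Set ℝ) : Prop where
  abs_le : ∀ c ∈ A, ∀ x, |F c x| ≤ N
  integral_le : ∀ c ∈ A, ∀ r ∈ Set.Ico 0 T,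
    ∫ x in (0 : ℝ)..L, (u c - u r) x * (F c x - F r x) ≤ K * l2NormSq L (u c - u r)

namespace IsUniformlyDissipativeOn

variable {L T K N : ℝ} {u F : ℝ → ℝ → ℝ} {A : Set ℝ}

theorem two_mul_integral_sub_mul_le (hL : 0 ≤ L) (hu : IsPointwiseEvolution T u F)
    (hA : IsUniformlyDissipativeOn L T K N u F A) {c r τ : ℝ} (hc : c ∈ A)
    (hcT : c ∈ Set.Ico 0 T) (hr : r ∈ Set.Ico 0 T) (hτ : 0 < τ) :
    2 * ∫ x in (0 : ℝ)..L, (u r - u c) x * F r x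
      ≤ (2 * K + 1 / τ) * l2NormSq L (u r - u c) + τ * (N ^ 2 * L) := by
  have hdiff : Continuous (u r - u c) := (hu.continuous r).sub (hu.continuous c)
  have hsplit : ∫ x in (0 : ℝ)..L, (u c - u r) x * (F c x - F r x)
      = (∫ x in (0 : ℝ)..L, (u r - u c) x * F r x)
        - ∫ x in (0 : ℝ)..L, (u r - u c) x * F c x := by
    rw [← intervalIntegral.integral_sub (hu.intervalIntegrable_mul hr hdiff _ _)
      (hu.intervalIntegrable_mul hcT hdiff _ _)]
    congr with x
    simp only [Pi.sub_apply]
    ring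
  have hdiss := hA.integral_le c hc r hr
  rw [hsplit, l2NormSq_sub_comm] at hdiss
  have hyoung := integral_mul_le_of_abs_le hL (show 0 < 1 / (2 * τ) by positivity) hdiff
    (hu.measurable hcT) (hA.abs_le c hc)
  have hconst : 1 / (4 * (1 / (2 * τ))) * N ^ 2 * L = τ * (N ^ 2 * L) / 2 := by
    field_simp
    norm_num
  have hhalf : 1 / (2 * τ) = 1 / τ / 2 := by field_simp
  rw [hconst, hhalf] at hyoung
  linarith

theorem l2NormSq_sub_le (hL : 0 ≤ L) (hK : 0 ≤ K) (hu : IsPointwiseEvolution T u F)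
    (hA : IsUniformlyDissipativeOn L T K N u F A) {c t : ℝ} (hc : c ∈ A) (hc0 : 0 ≤ c)
    (hct : c ≤ t) (htT : t ≤ T) (hshort : t - c ≤ 1)
    (hLip : ∀ s ∈ Set.Ioo c t, IsL2RightLipschitzAt L u s) :
    l2NormSq L (u t - u c) ≤ N ^ 2 * L * exp (2 * K + 1) * (t - c) ^ 2 := by
  rcases hct.eq_or_lt with rfl | hlt
  · simp [l2NormSq_zero]
  have hτ : 0 < t - c := sub_pos.2 hlt
  have hmem (s : ℝ) (hs : s ∈ Set.Ioo c t) : s ∈ Set.Ico 0 T :=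
    ⟨hc0.trans hs.1.le, hs.2.trans_le htT⟩
  have hev := hu.sub_const (hu.continuous c)
  have hgronwall := le_gronwallBound_of_hasDerivWithinAt
    (continuous_l2NormSq L hev.continuous_uncurry) hlt.le
    (fun s hs => hev.hasDerivWithinAt_l2NormSq hL (hmem s hs) ((hLip s hs).sub_const (u c)))
    (fun s hs => hA.two_mul_integral_sub_mul_le hL hu hc ⟨hc0, hlt.trans_le htT⟩ (hmem s hs) hτ)
  rw [sub_self, l2NormSq_zero] at hgronwall
  exact hgronwall.trans (gronwallBound_zero_le hK (by positivity) hτ hshort)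

end IsUniformlyDissipativeOn

/-! ### Gaps of a closed set of times -/

/-- `(c, d)` is a bounded connected component of the complement of `Z`, for a closed set `Z`. -/
structure IsGap (Z : Set ℝ) (c d : ℝ) : Prop where
  left_mem : c ∈ Z
  right_mem : d ∈ Z
  lt : c < d
  notMem : ∀ y ∈ Set.Ioo c d, y ∉ Z

theorem eventually_abs_sub_le_of_hasDerivWithinAt {g : ℝ → ℝ} {g' N s : ℝ}
    (hg : HasDerivWithinAt g g' (Set.Ici s) s) (hN : |g'| < N) :
    ∀ᶠ y in 𝓝[>] s, |g y - g s| ≤ N * (y - s) := by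
  filter_upwards [(hg.mono Set.Ioi_subset_Ici_self).limsup_norm_slope_le hN, self_mem_nhdsWithin]
    with y hy (hsy : s < y)
  have hpos : 0 < y - s := sub_pos.2 hsy
  rw [Real.norm_of_nonneg hpos.le, inv_mul_lt_iff₀ hpos, mul_comm] at hy
  exact hy.le

theorem exists_gt_mem_or_isGap {Z : Set ℝ} {s z' : ℝ} {P : ℝ → Prop} (hZ : IsClosed Z)
    (hs : s ∈ Z) (hz' : z' ∈ Z) (hlt : s < z') (hP : ∀ᶠ y in 𝓝[>] s, P y) :
    ∃ d ∈ Z, s < d ∧ (P d ∨ IsGap Z s d) := by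
  obtain ⟨v, hv : s < v, hvP⟩ := mem_nhdsGT_iff_exists_Ioo_subset.1 hP
  by_cases hnear : ∃ d ∈ Z, d ∈ Set.Ioo s v
  · obtain ⟨d, hdZ, hd⟩ := hnear
    exact ⟨d, hdZ, hd.1, .inl (hvP hd)⟩
  push Not at hnear
  have hvz' : v ≤ z' := le_of_not_gt fun h => hnear z' hz' ⟨hlt, h⟩
  obtain ⟨d, ⟨hdZ, hd⟩, hmin⟩ := (isCompact_Icc.inter_left hZ :
    IsCompact (Z ∩ Set.Icc v z')).exists_isLeast ⟨z', hz', hvz', le_rfl⟩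
  refine ⟨d, hdZ, hv.trans_le hd.1, .inr ⟨hs, hdZ, hv.trans_le hd.1, fun y hy hyZ => ?_⟩⟩
  have hvy : v ≤ y := le_of_not_gt fun h => hnear y hyZ ⟨hy.1, h⟩
  exact hy.2.not_ge (hmin ⟨hyZ, hvy, hy.2.le.trans hd.2⟩)

theorem mem_of_isCompact_of_forall_exists_gt {S : Set ℝ} {z' : ℝ} (hS : IsCompact S)
    (hne : S.Nonempty) (hle : ∀ s ∈ S, s ≤ z') (hgt : ∀ s ∈ S, s < z' → ∃ d ∈ S, s < d) :
    z' ∈ S := by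
  obtain ⟨s, hsS, hmax⟩ := hS.exists_isGreatest hne
  rcases (hle s hsS).eq_or_lt with rfl | hlt
  · exact hsS
  · obtain ⟨d, hdS, hsd⟩ := hgt s hsS hlt
    exact absurd (hmax hdS) hsd.not_ge

/-- The set of `s ∈ Z` up to which the estimate holds is compact, and it can be continued beyond
every `s < z'`: through the derivative if `Z` accumulates at `s` from the right, and across the gap
starting at `s` otherwise. -/
theorem abs_sub_le_mul_add_integral_of_lt {g g' φ : ℝ → ℝ} {Z : Set ℝ} {z z' N : ℝ}
    (hg : Continuous g) (hZ : IsClosed Z) (hz : IsLeast Z z) (hz' : IsGreatest Z z')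
    (hderiv : ∀ s ∈ Z, s < z' → HasDerivWithinAt g (g' s) (Set.Ici s) s)
    (hN : ∀ s ∈ Z, s < z' → |g' s| < N) (hφ : IntervalIntegrable φ volume z z')
    (hφ0 : ∀ τ, 0 ≤ φ τ) (hgap : ∀ c d, IsGap Z c d → |g d - g c| ≤ ∫ τ in c..d, φ τ) :
    |g z' - g z| ≤ N * (z' - z) + ∫ τ in z..z', φ τ := by
  have hzz' : z ≤ z' := hz.2 hz'.1
  have hφ_sub {a b : ℝ} (ha : a ∈ Z) (hb : b ∈ Z) : IntervalIntegrable φ volume a b :=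
    hφ.mono_set (by
      rw [Set.uIcc_of_le hzz']
      exact Set.uIcc_subset_Icc ⟨hz.2 ha, hz'.2 ha⟩ ⟨hz.2 hb, hz'.2 hb⟩)
  have hprimitive : ContinuousOn (fun s => ∫ τ in z..s, φ τ) (Set.Icc z z') := by
    simpa only [Set.uIcc_of_le hzz'] using
      intervalIntegral.continuousOn_primitive_interval' hφ Set.left_mem_uIcc
  let S := Z ∩ {s ∈ Set.Icc z z' | |g s - g z| ≤ N * (s - z) + ∫ τ in z..s, φ τ}
  have hS : IsCompact S :=
    isCompact_Icc.of_isClosed_subset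
      (hZ.inter (isClosed_Icc.isClosed_le (by fun_prop) (by fun_prop))) fun s hs => hs.2.1
  refine (mem_of_isCompact_of_forall_exists_gt hS ⟨z, hz.1, ⟨le_rfl, hzz'⟩, by simp⟩
    (fun s hs => hs.2.1.2) ?_).2.2
  rintro s ⟨hsZ, -, hbound⟩ hlt
  obtain ⟨d, hdZ, hsd, hd⟩ := exists_gt_mem_or_isGap hZ hsZ hz'.1 hlt
    (eventually_abs_sub_le_of_hasDerivWithinAt (hderiv s hsZ hlt) (hN s hsZ hlt))
  have hstep : |g d - g s| ≤ N * (d - s) + ∫ τ in s..d, φ τ := by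
    rcases hd with hd | hd
    · linarith [intervalIntegral.integral_nonneg (μ := volume) hsd.le fun τ _ => hφ0 τ]
    · have hN0 : 0 ≤ N := (abs_nonneg _).trans (hN s hsZ hlt).le
      linarith [hgap s d hd, mul_nonneg hN0 (sub_nonneg.2 hsd.le)]
  refine ⟨d, ⟨hdZ, ⟨hz.2 hdZ, hz'.2 hdZ⟩, ?_⟩, hsd⟩
  rw [← intervalIntegral.integral_add_adjacent_intervals (hφ_sub hz.1 hsZ) (hφ_sub hsZ hdZ)]
  linarith [abs_sub_le (g d) (g s) (g z)]

theorem abs_sub_le_mul_add_integral {g g' φ : ℝ → ℝ} {Z : Set ℝ} {z z' N : ℝ}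
    (hg : Continuous g) (hZ : IsClosed Z) (hz : IsLeast Z z) (hz' : IsGreatest Z z')
    (hderiv : ∀ s ∈ Z, s < z' → HasDerivWithinAt g (g' s) (Set.Ici s) s)
    (hN : ∀ s ∈ Z, s < z' → |g' s| ≤ N) (hφ : IntervalIntegrable φ volume z z')
    (hφ0 : ∀ τ, 0 ≤ φ τ) (hgap : ∀ c d, IsGap Z c d → |g d - g c| ≤ ∫ τ in c..d, φ τ) :
    |g z' - g z| ≤ N * (z' - z) + ∫ τ in z..z', φ τ := by
  have hcont : Continuous fun N' => N' * (z' - z) + ∫ τ in z..z', φ τ := by fun_prop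
  refine ge_of_tendsto (tendsto_nhdsWithin_of_tendsto_nhds (hcont.tendsto N) (s := Set.Ioi N)) ?_
  filter_upwards [self_mem_nhdsWithin] with N' (hN' : N < N')
  exact abs_sub_le_mul_add_integral_of_lt hg hZ hz hz' hderiv
    (fun s hs hlt => (hN s hs hlt).trans_lt hN') hφ hφ0 hgap

/-- The last point of `Z` up to time `τ`. The time `τ` is clamped to be at least `z`, the least
element of `Z` in all uses, so that such a point exists. -/
noncomputable def gapLeft (Z : Set ℝ) (z τ : ℝ) : ℝ :=
  sSup (Z ∩ Set.Iic (max z τ))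

/-- The first point of `Z` from time `τ` on. The time `τ` is clamped to be at most `z'`, the
greatest element of `Z` in all uses, so that such a point exists. -/
noncomputable def gapRight (Z : Set ℝ) (z' τ : ℝ) : ℝ :=
  sInf (Z ∩ Set.Ici (min z' τ))

section GapEnds

variable {Z : Set ℝ} {z z' τ : ℝ}

theorem isGreatest_gapLeft (hZ : IsClosed Z) (hz : IsLeast Z z) (τ : ℝ) :
    IsGreatest (Z ∩ Set.Iic (max z τ)) (gapLeft Z z τ) :=
  have hbdd : BddAbove (Z ∩ Set.Iic (max z τ)) := ⟨max z τ, fun _ hy => hy.2⟩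
  ⟨(hZ.inter isClosed_Iic).csSup_mem ⟨z, hz.1, le_max_left z τ⟩ hbdd,
    fun _ hy => le_csSup hbdd hy⟩

theorem isLeast_gapRight (hZ : IsClosed Z) (hz' : IsGreatest Z z') (τ : ℝ) :
    IsLeast (Z ∩ Set.Ici (min z' τ)) (gapRight Z z' τ) :=
  have hbdd : BddBelow (Z ∩ Set.Ici (min z' τ)) := ⟨min z' τ, fun _ hy => hy.2⟩
  ⟨(hZ.inter isClosed_Ici).csInf_mem ⟨z', hz'.1, min_le_left z' τ⟩ hbdd,
    fun _ hy => csInf_le hbdd hy⟩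

theorem monotone_gapLeft (hZ : IsClosed Z) (hz : IsLeast Z z) : Monotone (gapLeft Z z) :=
  fun _ τ' hττ' => (isGreatest_gapLeft hZ hz _).mono (isGreatest_gapLeft hZ hz τ')
    (Set.inter_subset_inter_right Z (Set.Iic_subset_Iic.2 (max_le_max le_rfl hττ')))

theorem monotone_gapRight (hZ : IsClosed Z) (hz' : IsGreatest Z z') : Monotone (gapRight Z z') :=
  fun _ τ' hττ' => (isLeast_gapRight hZ hz' τ').mono (isLeast_gapRight hZ hz' _)
    (Set.inter_subset_inter_right Z (Set.Ici_subset_Ici.2 (min_le_min le_rfl hττ')))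

theorem gapLeft_le_gapRight (hZ : IsClosed Z) (hz : IsLeast Z z) (hz' : IsGreatest Z z') (τ : ℝ) :
    gapLeft Z z τ ≤ gapRight Z z' τ := by
  obtain ⟨hleftZ, hleft⟩ := (isGreatest_gapLeft hZ hz τ).1
  obtain ⟨hrightZ, hright⟩ := (isLeast_gapRight hZ hz' τ).1
  rcases le_max_iff.1 (Set.mem_Iic.1 hleft) with hle | hle
  · exact hle.trans (hz.2 hrightZ)
  · rcases min_le_iff.1 (Set.mem_Ici.1 hright) with hge | hge
    · exact (hz'.2 hleftZ).trans hge
    · exact hle.trans hge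

theorem gapLeft_eq_gapRight_or_isGap (hZ : IsClosed Z) (hz : IsLeast Z z) (hz' : IsGreatest Z z')
    (τ : ℝ) : gapLeft Z z τ = gapRight Z z' τ ∨ IsGap Z (gapLeft Z z τ) (gapRight Z z' τ) := by
  obtain ⟨⟨hleftZ, -⟩, hleft⟩ := isGreatest_gapLeft hZ hz τ
  obtain ⟨⟨hrightZ, -⟩, hright⟩ := isLeast_gapRight hZ hz' τ
  refine (gapLeft_le_gapRight hZ hz hz' τ).eq_or_lt.imp_right fun hlt =>
    ⟨hleftZ, hrightZ, hlt, fun y hy hyZ => ?_⟩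
  rcases le_total y τ with hle | hle
  · exact hy.1.not_ge (hleft ⟨hyZ, hle.trans (le_max_right z τ)⟩)
  · exact hy.2.not_ge (hright ⟨hyZ, (min_le_right z' τ).trans hle⟩)

theorem IsGap.gapLeft_eq (hZ : IsClosed Z) (hz : IsLeast Z z) {c d : ℝ} (hgap : IsGap Z c d)
    (hτ : τ ∈ Set.Ioo c d) : gapLeft Z z τ = c := by
  obtain ⟨⟨hleftZ, hle⟩, hleft⟩ := isGreatest_gapLeft hZ hz τ
  rw [max_eq_right ((hz.2 hgap.left_mem).trans hτ.1.le)] at hle hleft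
  exact le_antisymm (le_of_not_gt fun h => hgap.notMem _ ⟨h, lt_of_le_of_lt hle hτ.2⟩ hleftZ)
    (hleft ⟨hgap.left_mem, hτ.1.le⟩)

theorem IsGap.gapRight_eq (hZ : IsClosed Z) (hz' : IsGreatest Z z') {c d : ℝ}
    (hgap : IsGap Z c d) (hτ : τ ∈ Set.Ioo c d) : gapRight Z z' τ = d := by
  obtain ⟨⟨hrightZ, hge⟩, hright⟩ := isLeast_gapRight hZ hz' τ
  rw [min_eq_right (hτ.2.le.trans (hz'.2 hgap.right_mem))] at hge hright
  exact le_antisymm (hright ⟨hgap.right_mem, hτ.2.le⟩)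
    (le_of_not_gt fun h => hgap.notMem _ ⟨lt_of_lt_of_le hτ.1 hge, h⟩ hrightZ)

end GapEnds

theorem sq_integral_le_mul_integral_sq {m : ℝ → ℝ} {a b : ℝ} (hab : a < b)
    (hm : IntervalIntegrable m volume a b)
    (hm_sq : IntervalIntegrable (fun τ => m τ ^ 2) volume a b) :
    (∫ τ in a..b, m τ) ^ 2 ≤ (b - a) * ∫ τ in a..b, m τ ^ 2 := by
  have hlen : 0 < b - a := sub_pos.2 hab
  rw [intervalIntegrable_iff, Set.uIoc_of_le hab.le] at hm hm_sq
  have hjensen := (even_two.convexOn_pow (𝕜 := ℝ)).map_set_average_le (by fun_prop) isClosed_univ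
    (by simpa using hab) (by simp) (by simp) hm hm_sq
  rw [← Set.uIoc_of_le hab.le] at hjensen
  simp only [interval_average_eq, smul_eq_mul, mul_pow] at hjensen
  calc (∫ τ in a..b, m τ) ^ 2 = (b - a) ^ 2 * ((b - a)⁻¹ ^ 2 * (∫ τ in a..b, m τ) ^ 2) := by
        field_simp
    _ ≤ (b - a) ^ 2 * ((b - a)⁻¹ * ∫ τ in a..b, m τ ^ 2) := by gcongr
    _ = (b - a) * ∫ τ in a..b, m τ ^ 2 := by field_simp

theorem intervalIntegrable_of_sq {m : ℝ → ℝ} {a b : ℝ} (hm : Measurable m)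
    (hm_sq : IntervalIntegrable (fun τ => m τ ^ 2) volume a b) :
    IntervalIntegrable m volume a b := by
  refine ((intervalIntegrable_const (c := (1 : ℝ))).add hm_sq).mono_fun' hm.aestronglyMeasurable
    (.of_forall fun τ => ?_)
  change |m τ| ≤ 1 + m τ ^ 2
  rw [abs_le]
  constructor <;> nlinarith [sq_nonneg (m τ - 1), sq_nonneg (m τ + 1)]

section Fubini

variable {L C z z' : ℝ} {m : ℝ → ℝ → ℝ}

theorem integrable_sq_of_l2NormSq_le (hL : 0 ≤ L) (hm : Measurable (Function.uncurry m))
    (hcont : ∀ τ, Continuous (m τ)) (hC : ∀ τ, l2NormSq L (m τ) ≤ C) :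
    Integrable (Function.uncurry fun τ x => m τ x ^ 2)
      ((volume.restrict (Set.uIoc z z')).prod (volume.restrict (Set.uIoc 0 L))) := by
  have hm_sq : Measurable (Function.uncurry fun τ x => m τ x ^ 2) := hm.pow_const 2
  refine (integrable_prod_iff hm_sq.aestronglyMeasurable).2 ⟨.of_forall fun τ => ?_, ?_⟩
  · exact intervalIntegrable_iff.1 (((hcont τ).pow 2).intervalIntegrable _ _)
  · have hconst : IntegrableOn (fun _ => C) (Set.uIoc z z') :=
      intervalIntegrable_iff.1 intervalIntegrable_const
    refine hconst.mono'
      hm_sq.norm.stronglyMeasurable.integral_prod_right'.aestronglyMeasurable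
      (.of_forall fun τ => ?_)
    simp only [Function.uncurry_apply_pair, norm_pow, Real.norm_eq_abs, sq_abs]
    rw [abs_of_nonneg (integral_nonneg fun x => sq_nonneg (m τ x)), Set.uIoc_of_le hL,
      ← intervalIntegral.integral_of_le hL]
    exact hC τ

theorem ae_intervalIntegrable_sq_of_l2NormSq_le (hL : 0 ≤ L)
    (hm : Measurable (Function.uncurry m)) (hcont : ∀ τ, Continuous (m τ))
    (hC : ∀ τ, l2NormSq L (m τ) ≤ C) :
    ∀ᵐ x ∂volume.restrict (Set.Ioc 0 L),
      IntervalIntegrable (fun τ => m τ x ^ 2) volume z z' := by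
  rw [← Set.uIoc_of_le hL]
  filter_upwards [(integrable_sq_of_l2NormSq_le hL hm hcont hC).prod_left_ae] with x hx
  exact intervalIntegrable_iff.2 hx

theorem intervalIntegrable_integral_sq_of_l2NormSq_le (hL : 0 ≤ L) (hzz' : z ≤ z')
    (hm : Measurable (Function.uncurry m)) (hcont : ∀ τ, Continuous (m τ))
    (hC : ∀ τ, l2NormSq L (m τ) ≤ C) :
    IntervalIntegrable (fun x => ∫ τ in z..z', m τ x ^ 2) volume 0 L := by
  rw [intervalIntegrable_iff]
  simp only [intervalIntegral.integral_of_le hzz', ← Set.uIoc_of_le hzz']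
  exact (integrable_sq_of_l2NormSq_le hL hm hcont hC).integral_prod_right

theorem integral_integral_sq_le_of_l2NormSq_le (hL : 0 ≤ L) (hzz' : z ≤ z')
    (hm : Measurable (Function.uncurry m)) (hcont : ∀ τ, Continuous (m τ))
    (hC : ∀ τ, l2NormSq L (m τ) ≤ C) :
    ∫ x in (0 : ℝ)..L, ∫ τ in z..z', m τ x ^ 2 ≤ C * (z' - z) := by
  have hint := integrable_sq_of_l2NormSq_le (z := z) (z' := z') hL hm hcont hC
  have hint_left : IntervalIntegrable (fun τ => ∫ x in (0 : ℝ)..L, m τ x ^ 2) volume z z' := by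
    rw [intervalIntegrable_iff]
    simp only [intervalIntegral.integral_of_le hL, ← Set.uIoc_of_le hL]
    exact hint.integral_prod_left
  rw [← intervalIntegral_intervalIntegral_swap
    (by rwa [IntegrableOn, Measure.volume_eq_prod, ← Measure.prod_restrict])]
  calc ∫ τ in z..z', ∫ x in (0 : ℝ)..L, m τ x ^ 2 ≤ ∫ _ in z..z', C :=
        intervalIntegral.integral_mono_on hzz' hint_left (by simp) fun τ _ => hC τ
    _ = C * (z' - z) := by rw [intervalIntegral.integral_const, smul_eq_mul, mul_comm]

end Fubini

/-- The absolute slope of `t ↦ u t x` across the gap of `Z` containing `τ`. For `τ ∈ Z` both ends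
are `τ` and the value is `0 / 0 = 0`. -/
noncomputable def gapSlope (Z : Set ℝ) (z z' : ℝ) (u : ℝ → ℝ → ℝ) (τ x : ℝ) : ℝ :=
  |u (gapRight Z z' τ) x - u (gapLeft Z z τ) x| / (gapRight Z z' τ - gapLeft Z z τ)

section GapSlope

variable {L N C z z' : ℝ} {u F : ℝ → ℝ → ℝ} {Z : Set ℝ}

theorem gapSlope_nonneg (hZ : IsClosed Z) (hz : IsLeast Z z) (hz' : IsGreatest Z z') (τ x : ℝ) :
    0 ≤ gapSlope Z z z' u τ x :=
  div_nonneg (abs_nonneg _) (sub_nonneg.2 (gapLeft_le_gapRight hZ hz hz' τ))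

theorem continuous_gapSlope (hu : ∀ t, Continuous (u t)) (τ : ℝ) :
    Continuous (gapSlope Z z z' u τ) :=
  ((hu _).sub (hu _)).abs.div_const _

theorem measurable_uncurry_gapSlope (hZ : IsClosed Z) (hz : IsLeast Z z) (hz' : IsGreatest Z z')
    (hu : Continuous (Function.uncurry u)) :
    Measurable (Function.uncurry (gapSlope Z z z' u)) := by
  have hleft : Measurable fun p : ℝ × ℝ => gapLeft Z z p.1 :=
    (monotone_gapLeft hZ hz).measurable.comp measurable_fst
  have hright : Measurable fun p : ℝ × ℝ => gapRight Z z' p.1 :=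
    (monotone_gapRight hZ hz').measurable.comp measurable_fst
  exact ((hu.measurable.comp (hright.prodMk measurable_snd)).sub
    (hu.measurable.comp (hleft.prodMk measurable_snd))).abs.div (hright.sub hleft)

theorem integral_gapSlope (hZ : IsClosed Z) (hz : IsLeast Z z) (hz' : IsGreatest Z z') {c d : ℝ}
    (hgap : IsGap Z c d) (x : ℝ) :
    ∫ τ in c..d, gapSlope Z z z' u τ x = |u d x - u c x| := by
  have hconst : Set.EqOn (fun τ => gapSlope Z z z' u τ x) (fun _ => |u d x - u c x| / (d - c))
      (Set.Ioo c d) := fun τ hτ => by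
    simp only [gapSlope, hgap.gapLeft_eq hZ hz hτ, hgap.gapRight_eq hZ hz' hτ]
  rw [intervalIntegral.integral_congr_Ioo_of_le hgap.lt.le hconst, intervalIntegral.integral_const,
    smul_eq_mul, mul_div_cancel₀ _ (sub_pos.2 hgap.lt).ne']

theorem l2NormSq_gapSlope_le (hZ : IsClosed Z) (hz : IsLeast Z z) (hz' : IsGreatest Z z')
    (hC : 0 ≤ C) (hgap : ∀ c d, IsGap Z c d → l2NormSq L (u d - u c) ≤ C * (d - c) ^ 2) (τ : ℝ) :
    l2NormSq L (gapSlope Z z z' u τ) ≤ C := by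
  simp only [l2NormSq, gapSlope, div_pow, sq_abs, intervalIntegral.integral_div]
  rcases gapLeft_eq_gapRight_or_isGap hZ hz hz' τ with heq | hτ
  · rw [heq, sub_self, zero_pow two_ne_zero, div_zero]
    exact hC
  · exact (div_le_iff₀ (pow_pos (sub_pos.2 hτ.lt) 2)).2 (hgap _ _ hτ)

theorem sq_sub_le_of_forall_isGap (hZ : IsClosed Z) (hz : IsLeast Z z) (hz' : IsGreatest Z z')
    (hlt : z < z') (hu : Continuous (Function.uncurry u))
    (hderiv : ∀ s ∈ Z, s < z' → ∀ x, HasDerivWithinAt (fun τ => u τ x) (F s x) (Set.Ici s) s)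
    (hN : ∀ s ∈ Z, s < z' → ∀ x, |F s x| ≤ N) {x : ℝ}
    (hint : IntervalIntegrable (fun τ => gapSlope Z z z' u τ x ^ 2) volume z z') :
    (u z' x - u z x) ^ 2
      ≤ 2 * N ^ 2 * (z' - z) ^ 2 + 2 * (z' - z) * ∫ τ in z..z', gapSlope Z z z' u τ x ^ 2 := by
  have hmeas : Measurable fun τ => gapSlope Z z z' u τ x :=
    (measurable_uncurry_gapSlope hZ hz hz' hu).of_uncurry_right
  have hint' := intervalIntegrable_of_sq hmeas hint
  have hcont : Continuous fun τ => u τ x := hu.comp (Continuous.prodMk_left x)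
  have habs := abs_sub_le_mul_add_integral (φ := fun τ => gapSlope Z z z' u τ x) hcont hZ hz hz'
    (fun s hs hlt => hderiv s hs hlt x) (fun s hs hlt => hN s hs hlt x) hint'
    (fun τ => gapSlope_nonneg hZ hz hz' τ x)
    (fun c d hgap => (integral_gapSlope hZ hz hz' hgap x).ge)
  calc (u z' x - u z x) ^ 2 = |u z' x - u z x| ^ 2 := (sq_abs _).symm
    _ ≤ (N * (z' - z) + ∫ τ in z..z', gapSlope Z z z' u τ x) ^ 2 := by gcongr
    _ ≤ 2 * ((N * (z' - z)) ^ 2 + (∫ τ in z..z', gapSlope Z z z' u τ x) ^ 2) := add_sq_le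
    _ ≤ _ := by linarith [sq_integral_le_mul_integral_sq hlt hint' hint, mul_pow N (z' - z) 2]

theorem l2NormSq_sub_le_of_forall_isGap (hL : 0 ≤ L) (hC : 0 ≤ C) (hZ : IsClosed Z)
    (hz : IsLeast Z z) (hz' : IsGreatest Z z') (hu : Continuous (Function.uncurry u))
    (hderiv : ∀ s ∈ Z, s < z' → ∀ x, HasDerivWithinAt (fun τ => u τ x) (F s x) (Set.Ici s) s)
    (hN : ∀ s ∈ Z, s < z' → ∀ x, |F s x| ≤ N)
    (hgap : ∀ c d, IsGap Z c d → l2NormSq L (u d - u c) ≤ C * (d - c) ^ 2) :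
    l2NormSq L (u z' - u z) ≤ (2 * N ^ 2 * L + 2 * C) * (z' - z) ^ 2 := by
  rcases (hz.2 hz'.1).eq_or_lt with rfl | hlt
  · simp [l2NormSq_zero]
  have hcont (t : ℝ) : Continuous (u t) := hu.comp (Continuous.prodMk_right t)
  have hmeas := measurable_uncurry_gapSlope hZ hz hz' hu
  have hslope := continuous_gapSlope (Z := Z) (z := z) (z' := z') hcont
  have hbound := l2NormSq_gapSlope_le hZ hz hz' hC hgap
  have hint := (intervalIntegrable_integral_sq_of_l2NormSq_le
    hL hlt.le hmeas hslope hbound).const_mul (2 * (z' - z))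
  calc l2NormSq L (u z' - u z)
      ≤ ∫ x in (0 : ℝ)..L, (2 * N ^ 2 * (z' - z) ^ 2
          + 2 * (z' - z) * ∫ τ in z..z', gapSlope Z z z' u τ x ^ 2) := by
        refine intervalIntegral.integral_mono_ae_restrict hL
          (Continuous.intervalIntegrable (((hcont z').sub (hcont z)).pow 2) _ _)
          (intervalIntegrable_const.add hint) ?_
        rw [← restrict_Ioc_eq_restrict_Icc]
        filter_upwards [ae_intervalIntegrable_sq_of_l2NormSq_le hL hmeas hslope hbound] with x hx
        exact sq_sub_le_of_forall_isGap hZ hz hz' hlt hu hderiv hN hx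
    _ = 2 * N ^ 2 * (z' - z) ^ 2 * L
          + 2 * (z' - z) * ∫ x in (0 : ℝ)..L, ∫ τ in z..z', gapSlope Z z z' u τ x ^ 2 := by
        rw [intervalIntegral.integral_add intervalIntegrable_const hint,
          intervalIntegral.integral_const, intervalIntegral.integral_const_mul, sub_zero,
          smul_eq_mul, mul_comm L]
    _ ≤ 2 * N ^ 2 * (z' - z) ^ 2 * L + 2 * (z' - z) * (C * (z' - z)) := by
        gcongr
        exact integral_integral_sq_le_of_l2NormSq_le hL hlt.le hmeas hslope hbound
    _ = (2 * N ^ 2 * L + 2 * C) * (z' - z) ^ 2 := by ring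

end GapSlope

/-! ### Baire category and Lipschitz continuity at every time -/

theorem exists_mem_nhdsWithin_closure_of_isClosed_cover {X : Type*} [MetricSpace X]
    [CompleteSpace X] {ι : Type*} [Countable ι] {B : Set X} {A : ι → Set X} (hB : B.Nonempty)
    (hA : ∀ i, IsClosed (A i)) (hcover : closure B ⊆ ⋃ i, A i) :
    ∃ i, ∃ s ∈ B, A i ∈ 𝓝[closure B] s := by
  have : Nonempty (closure B) := hB.closure.to_subtype
  have : CompleteSpace (closure B) := isClosed_closure.completeSpace_coe
  have hcover' : ⋃ i, ((↑) : closure B → X) ⁻¹' A i = Set.univ :=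
    Set.preimage_iUnion.symm.trans (Set.eq_univ_of_forall fun t => hcover t.2)
  obtain ⟨i, t, ht⟩ := nonempty_interior_of_iUnion_of_closed
    (fun i => (hA i).preimage continuous_subtype_val) hcover'
  obtain ⟨V, hV, hVeq⟩ := isOpen_induced_iff.1
    (isOpen_interior (s := ((↑) : closure B → X) ⁻¹' A i))
  rw [← hVeq] at ht
  obtain ⟨s, hsV, hsB⟩ := mem_closure_iff.1 t.2 V hV ht
  refine ⟨i, s, hsB, mem_nhdsWithin.2 ⟨V, hV, hsV, fun y hy => ?_⟩⟩
  have hy' : (⟨y, hy.2⟩ : closure B) ∈ ((↑) : closure B → X) ⁻¹' V := hy.1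
  rw [hVeq] at hy'
  exact interior_subset (s := ((↑) : closure B → X) ⁻¹' A i) hy'

section

variable {L T : ℝ} {u F : ℝ → ℝ → ℝ}

/-- Up to the last time of `Z` before `t` the estimates across the gaps of `Z` add up; the
remaining times up to `t` form a single interval outside `Z`. -/
theorem IsUniformlyDissipativeOn.l2NormSq_sub_le_of_inter_Icc_subset {K N s t : ℝ} {A Z : Set ℝ}
    (hL : 0 ≤ L) (hK : 0 ≤ K) (hu : IsPointwiseEvolution T u F)
    (hA : IsUniformlyDissipativeOn L T K N u F A) (hZ : IsClosed Z) (hsZ : s ∈ Z) (hs : 0 ≤ s)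
    (hst : s ≤ t) (htT : t ≤ T) (hshort : t - s ≤ 1) (hZA : Z ∩ Set.Icc s t ⊆ A)
    (hLip : ∀ r ∈ Set.Ioo s t, r ∉ Z → IsL2RightLipschitzAt L u r) :
    l2NormSq L (u t - u s)
      ≤ (4 * N ^ 2 * L + 6 * (N ^ 2 * L * exp (2 * K + 1))) * (t - s) ^ 2 := by
  set C := N ^ 2 * L * exp (2 * K + 1)
  have hC : 0 ≤ C := by positivity
  obtain ⟨c, ⟨hcZ, hsc, hct⟩, hmax⟩ := (isCompact_Icc.inter_left hZ :
    IsCompact (Z ∩ Set.Icc s t)).exists_isGreatest ⟨s, hsZ, le_rfl, hst⟩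
  have houtside {a b : ℝ} (ha : a ∈ Z ∩ Set.Icc s t) (hab : a ≤ b) (hbt : b ≤ t)
      (hno : ∀ y ∈ Set.Ioo a b, y ∉ Z ∩ Set.Icc s t) :
      l2NormSq L (u b - u a) ≤ C * (b - a) ^ 2 := by
    refine hA.l2NormSq_sub_le hL hK hu (hZA ha) (hs.trans ha.2.1) hab (hbt.trans htT)
      (by linarith [ha.2.1]) fun r hr => ?_
    have hrst : r ∈ Set.Ioo s t := ⟨ha.2.1.trans_lt hr.1, hr.2.trans_le hbt⟩
    exact hLip r hrst fun hrZ => hno r hr ⟨hrZ, Set.Ioo_subset_Icc_self hrst⟩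
  have hlast : l2NormSq L (u t - u c) ≤ C * (t - c) ^ 2 :=
    houtside ⟨hcZ, hsc, hct⟩ hct le_rfl fun y hy hyZ => hy.1.not_ge (hmax hyZ)
  have hgaps : l2NormSq L (u c - u s) ≤ (2 * N ^ 2 * L + 2 * C) * (c - s) ^ 2 := by
    refine l2NormSq_sub_le_of_forall_isGap (F := F) hL hC (hZ.inter isClosed_Icc)
      ⟨⟨hsZ, le_rfl, hst⟩, fun y hy => hy.2.1⟩ ⟨⟨hcZ, hsc, hct⟩, hmax⟩ hu.continuous_uncurry
      (fun r hr hrc => hu.hasDerivWithinAt r ⟨hs.trans hr.2.1, by linarith⟩)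
      (fun r hr _ => hA.abs_le r (hZA hr))
      fun a b hab => houtside hab.left_mem hab.lt.le hab.right_mem.2.2 hab.notMem
  have hsplit := l2NormSq_add_le hL ((hu.continuous t).sub (hu.continuous c))
    ((hu.continuous c).sub (hu.continuous s))
  rw [sub_add_sub_cancel] at hsplit
  calc l2NormSq L (u t - u s)
      ≤ 2 * (C * (t - c) ^ 2) + 2 * ((2 * N ^ 2 * L + 2 * C) * (c - s) ^ 2) := by linarith
    _ ≤ 2 * (C * (t - s) ^ 2) + 2 * ((2 * N ^ 2 * L + 2 * C) * (t - s) ^ 2) := by gcongr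
    _ = (4 * N ^ 2 * L + 6 * C) * (t - s) ^ 2 := by ring

theorem IsUniformlyDissipativeOn.isL2RightLipschitzAt {K N s : ℝ} {A Z : Set ℝ}
    (hL : 0 ≤ L) (hK : 0 ≤ K) (hu : IsPointwiseEvolution T u F)
    (hA : IsUniformlyDissipativeOn L T K N u F A) (hZ : IsClosed Z) (hsZ : s ∈ Z)
    (hs : s ∈ Set.Ico 0 T) (hAs : A ∈ 𝓝[Z] s)
    (hLip : ∀ r ∈ Set.Ico 0 T, r ∉ Z → IsL2RightLipschitzAt L u r) :
    IsL2RightLipschitzAt L u s := by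
  obtain ⟨ε, hε, hball⟩ := Metric.mem_nhdsWithin_iff.1 hAs
  have hpos : s < min T (s + min ε 1) := lt_min hs.2 (lt_add_of_pos_right s (lt_min hε one_pos))
  refine ⟨4 * N ^ 2 * L + 6 * (N ^ 2 * L * exp (2 * K + 1)), ?_⟩
  filter_upwards [Ioo_mem_nhdsGT hpos] with t ⟨hst, ht⟩
  obtain ⟨htT, hts⟩ := lt_min_iff.1 ht
  obtain ⟨htε, hshort⟩ := lt_min_iff.1 (sub_lt_iff_lt_add'.2 hts)
  refine hA.l2NormSq_sub_le_of_inter_Icc_subset hL hK hu hZ hsZ hs.1 hst.le htT.le hshort.le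
    (fun y hy => hball ⟨?_, hy.1⟩) fun r hr => hLip r ⟨hs.1.trans hr.1.le, hr.2.trans htT⟩
  rw [Metric.mem_ball, Real.dist_eq, abs_of_nonneg (sub_nonneg.2 hy.2.1)]
  linarith [hy.2.2]

/-- By Baire's theorem one of the sets `A n` would contain a portion of the closure of the set of
exceptional times; near the exceptional times of that portion the estimate holds nonetheless. -/
theorem IsPointwiseEvolution.isL2RightLipschitzAt {A : ℕ → Set ℝ}
    (hL : 0 ≤ L) (hu : IsPointwiseEvolution T u F) (hA_closed : ∀ n, IsClosed (A n))
    (hcover : Set.Icc 0 T ⊆ ⋃ n, A n)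
    (hA : ∀ n, ∃ K N, 0 ≤ K ∧ IsUniformlyDissipativeOn L T K N u F (A n)) :
    ∀ t ∈ Set.Ico 0 T, IsL2RightLipschitzAt L u t := by
  by_contra! hbad
  let B := {t ∈ Set.Ico 0 T | ¬ IsL2RightLipschitzAt L u t}
  have hB : closure B ⊆ Set.Icc 0 T :=
    closure_minimal (fun t ht => Set.Ico_subset_Icc_self ht.1) isClosed_Icc
  obtain ⟨n, s, ⟨hs, hsbad⟩, hAs⟩ :=
    exists_mem_nhdsWithin_closure_of_isClosed_cover (B := B) hbad hA_closed (hB.trans hcover)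
  obtain ⟨K, N, hK, hdiss⟩ := hA n
  refine hsbad (hdiss.isL2RightLipschitzAt (Z := closure B) hL hK hu isClosed_closure
    (subset_closure ⟨hs, hsbad⟩) hs hAs fun r hr hrB => ?_)
  by_contra hr_bad
  exact hrB (subset_closure ⟨hr, hr_bad⟩)

end

theorem IsPointwiseEvolution.l2NormSq_sub_le {L T K t : ℝ} {u v F G : ℝ → ℝ → ℝ} (hL : 0 ≤ L)
    (hu : IsPointwiseEvolution T u F) (hv : IsPointwiseEvolution T v G)
    (hLip_u : ∀ r ∈ Set.Ico 0 T, IsL2RightLipschitzAt L u r)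
    (hLip_v : ∀ r ∈ Set.Ico 0 T, IsL2RightLipschitzAt L v r)
    (hdiss : ∀ r ∈ Set.Ico 0 T,
      ∫ x in (0 : ℝ)..L, (u r - v r) x * (F r x - G r x) ≤ K * l2NormSq L (u r - v r))
    (ht : t ∈ Set.Icc 0 T) :
    l2NormSq L (u t - v t) ≤ l2NormSq L (u 0 - v 0) * exp (2 * K * t) := by
  have hsub := hu.sub hv
  have hIco {r : ℝ} (hr : r ∈ Set.Ioo 0 t) : r ∈ Set.Ico 0 T := ⟨hr.1.le, hr.2.trans_le ht.2⟩
  have hgronwall := le_gronwallBound_of_hasDerivWithinAt (K := 2 * K) (ε := 0)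
    (continuous_l2NormSq L hsub.continuous_uncurry) ht.1
    (fun r hr => hsub.hasDerivWithinAt_l2NormSq hL (hIco hr)
      ((hLip_u r (hIco hr)).sub hL hu.continuous hv.continuous (hLip_v r (hIco hr))))
    (fun r hr => by
      rw [add_zero, mul_assoc]
      exact mul_le_mul_of_nonneg_left (hdiss r (hIco hr)) zero_le_two)
  rwa [gronwallBound_ε0, sub_zero] at hgronwall

/-! ### Solutions of the step-flow equation -/

namespace IsStepPDESol

variable {L T β t : ℝ} {h H h₁ h₂ H₁ H₂ : ℝ → ℝ → ℝ}

theorem isStepProfile (hsol : IsStepPDESol L T β h H) (ht : t ∈ Set.Icc 0 T) :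
    IsStepProfile L β (fun x => h x t) (fun x => H x t) where
  contDiff := hsol.1 t ht
  add_period := hsol.2.1 t ht
  deriv_le := hsol.2.2.1 t ht
  hilbert x := hsol.2.2.2.2.1 x t ht

theorem continuous_uncurry (hsol : IsStepPDESol L T β h H) :
    Continuous (Function.uncurry fun t x => h x t) :=
  hsol.2.2.2.1.comp continuous_swap

theorem isPointwiseEvolution (hL : 0 < L) (hβ : β < 0) (hsol : IsStepPDESol L T β h H) :
    IsPointwiseEvolution T (fun t x => h x t)
      (fun t => stepVelocity L (fun x => h x t) (fun x => H x t)) where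
  continuous_uncurry := hsol.continuous_uncurry
  hasDerivWithinAt t ht x :=
    ((hsol.2.2.2.2.2 x t (Set.Ico_subset_Icc_self ht)).mono
      (Set.Icc_subset_Icc_left ht.1)).mono_of_mem_nhdsWithin (Icc_mem_nhdsGE ht.2)
  exists_abs_le t ht := by
    have hprofile := hsol.isStepProfile (Set.Ico_subset_Icc_self ht)
    obtain ⟨N, hN⟩ := hprofile.exists_abs_iteratedDeriv_four_le hL
    obtain ⟨N', hN'⟩ := exists_abs_stepVelocity_le hL hβ N
    exact ⟨N', hN' _ _ hprofile hN⟩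

theorem exists_isUniformlyDissipativeOn (hL : 0 < L) (hβ : β < 0)
    (hsol : IsStepPDESol L T β h H) (N : ℝ) :
    ∃ K N', 0 ≤ K ∧ IsUniformlyDissipativeOn L T K N' (fun t x => h x t)
      (fun t => stepVelocity L (fun x => h x t) (fun x => H x t))
      {t ∈ Set.Icc 0 T | ∀ x, |iteratedDeriv 4 (fun z => h z t) x| ≤ N} := by
  obtain ⟨K, hK, hdiss⟩ := exists_integral_sub_mul_stepVelocity_sub_le hL hβ (N * L * L)
  obtain ⟨N', hN'⟩ := exists_abs_stepVelocity_le hL hβ N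
  refine ⟨K, N', hK, fun c hc => hN' _ _ (hsol.isStepProfile hc.1) hc.2, fun c hc r hr => ?_⟩
  have hprofile := hsol.isStepProfile hc.1
  exact hdiss _ _ _ _ hprofile (hsol.isStepProfile (Set.Ico_subset_Icc_self hr))
    (hprofile.abs_iteratedDeriv_two_le hL hc.2)

theorem isL2RightLipschitzAt (hL : 0 < L) (hβ : β < 0) (hsol : IsStepPDESol L T β h H) :
    ∀ t ∈ Set.Ico 0 T, IsL2RightLipschitzAt L (fun t x => h x t) t := by
  refine (hsol.isPointwiseEvolution hL hβ).isL2RightLipschitzAt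
    (A := fun n : ℕ => {t ∈ Set.Icc 0 T | ∀ x, |iteratedDeriv 4 (fun z => h z t) x| ≤ n}) hL.le
    (fun n => isClosed_setOf_abs_iteratedDeriv_le isClosed_Icc
      (fun x => hsol.continuous_uncurry.comp (Continuous.prodMk_left x)) hsol.1 n)
    (fun t ht => ?_) fun n => hsol.exists_isUniformlyDissipativeOn hL hβ n
  obtain ⟨N, hN⟩ := (hsol.isStepProfile ht).exists_abs_iteratedDeriv_four_le hL
  obtain ⟨n, hn⟩ := exists_nat_ge N
  exact Set.mem_iUnion.2 ⟨n, ht, fun x => (hN x).trans hn⟩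

theorem eq_of_l2NormSq_sub_eq_zero (hL : 0 < L) (hsol₁ : IsStepPDESol L T β h₁ H₁)
    (hsol₂ : IsStepPDESol L T β h₂ H₂) (ht : t ∈ Set.Icc 0 T)
    (hzero : l2NormSq L (fun x => h₁ x t - h₂ x t) = 0) (x : ℝ) : h₁ x t = h₂ x t := by
  have hf := hsol₁.isStepProfile ht
  have hg := hsol₂.isStepProfile ht
  exact sub_eq_zero.1 (congrFun (eq_zero_of_l2NormSq_eq_zero hL
    (hf.contDiff.continuous.sub hg.contDiff.continuous) (hf.periodic_sub hg) hzero) x)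

end IsStepPDESol

/-- `L²`-stability (and hence uniqueness) for the continuum step-flow PDE:
there is a constant `C`, depending only on `β, M, L, T`, such that any two solutions `h₁, h₂`
(with slope bounded above by `β/2 < 0` and `|∂ₓ²h₁| ≤ M`) satisfy
`∫₀^L (h₁−h₂)²(·,t) ≤ C ∫₀^L (h₁−h₂)²(·,0)` for all `t ∈ [0,T]`; in particular solutions with
the same initial data coincide. -/
theorem stmt_5 (L T β M : ℝ) (hL : 0 < L) (hT : 0 < T) (hβ : β < 0) (hM : 0 < M) :
    ∃ C : ℝ, 0 < C ∧
      ∀ h₁ h₂ H₁ H₂ : ℝ → ℝ → ℝ,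
        IsStepPDESol L T β h₁ H₁ → IsStepPDESol L T β h₂ H₂ →
        (∀ t ∈ Set.Icc (0:ℝ) T, ∀ x : ℝ, |iteratedDeriv 2 (fun z => h₁ z t) x| ≤ M) →
        ((∀ t ∈ Set.Icc (0:ℝ) T,
            (∫ x in (0:ℝ)..L, (h₁ x t - h₂ x t) ^ 2)
              ≤ C * ∫ x in (0:ℝ)..L, (h₁ x 0 - h₂ x 0) ^ 2) ∧
          ((∀ x : ℝ, h₁ x 0 = h₂ x 0) →
            ∀ x : ℝ, ∀ t ∈ Set.Icc (0:ℝ) T, h₁ x t = h₂ x t)) := by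
  obtain ⟨K, hK, hdiss⟩ := exists_integral_sub_mul_stepVelocity_sub_le hL hβ M
  refine ⟨exp (2 * K * T), exp_pos _, fun h₁ h₂ H₁ H₂ hsol₁ hsol₂ hM₁ => ?_⟩
  have hstable (t : ℝ) (ht : t ∈ Set.Icc 0 T) : l2NormSq L (fun x => h₁ x t - h₂ x t)
      ≤ exp (2 * K * T) * l2NormSq L (fun x => h₁ x 0 - h₂ x 0) := by
    refine ((hsol₁.isPointwiseEvolution hL hβ).l2NormSq_sub_le (K := K) hL.le
      (hsol₂.isPointwiseEvolution hL hβ) (hsol₁.isL2RightLipschitzAt hL hβ)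
      (hsol₂.isL2RightLipschitzAt hL hβ) (fun r hr => ?_) ht).trans ?_
    · have hr' := Set.Ico_subset_Icc_self hr
      exact hdiss _ _ _ _ (hsol₁.isStepProfile hr') (hsol₂.isStepProfile hr') (hM₁ r hr')
    · rw [mul_comm]
      exact mul_le_mul_of_nonneg_right (exp_le_exp.2 (by gcongr; exact ht.2))
        (l2NormSq_nonneg hL.le _)
  refine ⟨hstable, fun hinit x t ht =>
    hsol₁.eq_of_l2NormSq_sub_eq_zero hL hsol₂ ht (le_antisymm ?_ (l2NormSq_nonneg hL.le _)) x⟩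
  have hzero : l2NormSq L (fun x => h₁ x 0 - h₂ x 0) = 0 := by simp [l2NormSq, hinit]
  simpa only [hzero, mul_zero] using hstable t ht
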